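/- arXiv:1010.2296 — 4 statements merged into one kernel-verified Lean document; each statement's English description precedes it below -/
import Mathlib

section
/- For every finite connected simple graph G of order n and minimum degree δ, the rainbow connection number satisfies rc(G) ≤ 3n/(δ + 1) + 3. -/
open SimpleGraph Set

/-- The predicate that an edge colouring `c` makes `G` rainbow connected: every pair of
vertices is joined by a path no two of whose edges receive the same colour. -/
def RainbowConnectedUnder {V : Type*} (G : SimpleGraph V) (c : Sym2 V → ℕ) : Prop :=
  ∀ u v : V, ∃ p : G.Walk u v, p.IsPath ∧ (p.edges.map c).Nodup

/-- The rainbow connection number of `G`: the least `n` such that some edge colouring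
using colours `< n` makes `G` rainbow connected. -/
noncomputable def rc {V : Type*} (G : SimpleGraph V) : ℕ :=
  sInf {n | ∃ c : Sym2 V → ℕ, (∀ e ∈ G.edgeSet, c e < n) ∧ RainbowConnectedUnder G c}

/-- Degree of a vertex (as the cardinality of its neighbour set). -/
noncomputable def deg {V : Type*} (G : SimpleGraph V) (v : V) : ℕ := (G.neighborSet v).ncard

/-- `D` is a dominating set of `G`. -/
def IsDominatingSet {V : Type*} (G : SimpleGraph V) (D : Set V) : Prop :=
  ∀ v : V, v ∈ D ∨ ∃ u ∈ D, G.Adj u v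

/-- The connected domination number of `G`. -/
noncomputable def connDomNum {V : Type*} (G : SimpleGraph V) : ℕ :=
  sInf {n | ∃ D : Set V, D.ncard = n ∧ IsDominatingSet G D ∧ (G.induce D).Connected}

/-- Distance of a vertex `v` to a set of vertices `D`. -/
noncomputable def distSet {V : Type*} (G : SimpleGraph V) (D : Set V) (v : V) : ℕ :=
  sInf ((fun u => G.dist u v) '' D)

/-- Diameter of `G`. -/
noncomputable def graphDiam {V : Type*} (G : SimpleGraph V) : ℕ :=
  sSup (Set.range fun p : V × V => G.dist p.1 p.2)

/-- Eccentricity of a vertex. -/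
noncomputable def ecc {V : Type*} (G : SimpleGraph V) (v : V) : ℕ :=
  sSup (Set.range fun u => G.dist v u)

/-- Radius of `G`. -/
noncomputable def graphRadius {V : Type*} (G : SimpleGraph V) : ℕ :=
  sInf (Set.range fun v => ecc G v)

/-- `G` is an interval graph: vertices can be assigned nonempty closed real intervals such
that two distinct vertices are adjacent iff their intervals intersect. -/
def IsIntervalGraph {V : Type*} (G : SimpleGraph V) : Prop :=
  ∃ a b : V → ℝ, (∀ v, a v ≤ b v) ∧
    ∀ u v : V, u ≠ v → (G.Adj u v ↔ (Set.Icc (a u) (b u) ∩ Set.Icc (a v) (b v)).Nonempty)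

/-- `G` is a unit interval graph. -/
def IsUnitIntervalGraph {V : Type*} (G : SimpleGraph V) : Prop :=
  ∃ a : V → ℝ,
    ∀ u v : V, u ≠ v →
      (G.Adj u v ↔ (Set.Icc (a u) (a u + 1) ∩ Set.Icc (a v) (a v + 1)).Nonempty)

/-- `G` is a circular arc graph: vertices can be assigned nonempty closed arcs of a circle
(images of closed intervals in `AddCircle 1`) such that two distinct vertices are adjacent
iff their arcs intersect. -/
def IsCircularArcGraph {V : Type*} (G : SimpleGraph V) : Prop :=
  ∃ a b : V → ℝ, (∀ v, a v ≤ b v) ∧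
    ∀ u v : V, u ≠ v → (G.Adj u v ↔
      (((fun x : ℝ => (x : AddCircle (1:ℝ))) '' Set.Icc (a u) (b u)) ∩
        ((fun x : ℝ => (x : AddCircle (1:ℝ))) '' Set.Icc (a v) (b v))).Nonempty)

/-- There is a path from `x` to `y` avoiding the closed neighbourhood of `z`. -/
def HasAvoidingPath {V : Type*} (G : SimpleGraph V) (x y z : V) : Prop :=
  ∃ p : G.Walk x y, p.IsPath ∧ ∀ w ∈ p.support, w ≠ z ∧ ¬ G.Adj z w

/-- `G` is AT-free: it has no asteroidal triple. -/
def IsATFree {V : Type*} (G : SimpleGraph V) : Prop :=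
  ¬ ∃ x y z : V, x ≠ y ∧ y ≠ z ∧ x ≠ z ∧ ¬G.Adj x y ∧ ¬G.Adj y z ∧ ¬G.Adj x z ∧
    HasAvoidingPath G x y z ∧ HasAvoidingPath G y z x ∧ HasAvoidingPath G x z y

/-- `G` is a threshold graph. -/
def IsThresholdGraph {V : Type*} (G : SimpleGraph V) : Prop :=
  ∃ (w : V → ℝ) (t : ℝ), ∀ u v : V, u ≠ v → (G.Adj u v ↔ t ≤ w u + w v)

/-- `G` is a chain graph: bipartite with the neighbourhoods of one side linearly ordered
by inclusion. -/
def IsChainGraph {V : Type*} (G : SimpleGraph V) : Prop :=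
  ∃ A B : Set V, A ∪ B = Set.univ ∧ Disjoint A B ∧
    (∀ u v : V, G.Adj u v → ¬(u ∈ A ∧ v ∈ A) ∧ ¬(u ∈ B ∧ v ∈ B)) ∧
    ∀ a₁ ∈ A, ∀ a₂ ∈ A,
      G.neighborSet a₁ ⊆ G.neighborSet a₂ ∨ G.neighborSet a₂ ⊆ G.neighborSet a₁

/-- `G` is chordal: it has no induced cycle of length greater than 3. -/
def IsChordal {V : Type*} (G : SimpleGraph V) : Prop :=
  ∀ n : ℕ, 4 ≤ n → IsEmpty (SimpleGraph.cycleGraph n ↪g G)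

/-!
If `δ ≤ 1`, the colouring of a spanning tree with `n - 1` distinct colours suffices. Otherwise grow
a connected set `D` greedily, starting from a single vertex. As long as some vertex is at distance
three from `D`, or is at distance two and has only one neighbour in `N[D]`, it can be added together
with a path to `D` so that each added vertex is paid for by `(δ + 1) / 3` new vertices of `N[D]`.
The final `D` therefore has at most `3n / (δ + 1) - 2` vertices, and every vertex outside `N[D]` has
two neighbours in `N[D]`.

A spanning tree of `G[D]` takes `|D| - 1` colours, and six more are enough to let any two vertices
leave for `D` through disjoint sets of colours. The vertices of `N¹(D)` are split into two sides and
reach `D` by an edge coloured by their side, `0` or `1`; every vertex of `N¹(D)` can also reach `D`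
with the colour of the other side, changing sides inside `N¹(D)` by colour `2` or through a vertex
outside `N[D]` by colours `3` and `4`. A vertex outside `N[D]` either has neighbours on both sides,
reached by `3` and `4`, or is connected by `5` to one neighbour and by `2` or `3` to the others.
Hence `rc(G) ≤ |D| + 5 ≤ 3n / (δ + 1) + 3`.
-/

namespace RainbowConnection

variable {V α : Type*}

section RainbowReachable

variable {G : SimpleGraph V} {c : Sym2 V → α} {S T : Finset α} {u v w : V}

/-- `u` and `v` are joined by a walk whose edges receive distinct colours, all from the palette
`S`. Walks are allowed in place of paths so that they can be concatenated; see
`RainbowReachable.exists_isPath`. -/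
def RainbowReachable (G : SimpleGraph V) (c : Sym2 V → α) (S : Finset α) (u v : V) : Prop :=
  ∃ p : G.Walk u v, (p.edges.map c).Nodup ∧ ∀ e ∈ p.edges, c e ∈ S

namespace RainbowReachable

theorem refl (u : V) : RainbowReachable G c S u u :=
  ⟨.nil, by simp, by simp⟩

theorem of_adj (h : G.Adj u v) : RainbowReachable G c {c s(u, v)} u v :=
  ⟨h.toWalk, by simp, by simp⟩

theorem mono (h : RainbowReachable G c S u v) (hST : S ⊆ T) : RainbowReachable G c T u v := by
  obtain ⟨p, hp, hS⟩ := h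
  exact ⟨p, hp, fun e he => hST (hS e he)⟩

theorem symm (h : RainbowReachable G c S u v) : RainbowReachable G c S v u := by
  obtain ⟨p, hp, hS⟩ := h
  exact ⟨p.reverse, by simpa [List.map_reverse] using hp, by simpa using hS⟩

theorem trans [DecidableEq α] (huv : RainbowReachable G c S u v)
    (hvw : RainbowReachable G c T v w) (hST : Disjoint S T) :
    RainbowReachable G c (S ∪ T) u w := by
  obtain ⟨p, hp, hS⟩ := huv
  obtain ⟨q, hq, hT⟩ := hvw
  refine ⟨p.append q, ?_, fun e he => ?_⟩
  · rw [Walk.edges_append, List.map_append]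
    refine hp.append hq fun x hxp hxq => ?_
    obtain ⟨e, he, rfl⟩ := List.mem_map.mp hxp
    obtain ⟨e', he', hee'⟩ := List.mem_map.mp hxq
    exact Finset.disjoint_left.mp hST (hS e he) (hee' ▸ hT e' he')
  · rw [Walk.edges_append, List.mem_append] at he
    exact Finset.mem_union.mpr (he.imp (hS e) (hT e))

theorem exists_isPath (h : RainbowReachable G c S u v) :
    ∃ p : G.Walk u v, p.IsPath ∧ (p.edges.map c).Nodup := by
  classical
  obtain ⟨p, hp, -⟩ := h
  exact ⟨p.bypass, p.bypass_isPath, hp.sublist (p.edges_bypass_sublist_edges.map c)⟩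

end RainbowReachable

end RainbowReachable

section RainbowColorable

variable {G H : SimpleGraph V} {k : ℕ}

/-- Some edge colouring with colours `0, …, k - 1` makes `G` rainbow connected. Unlike `rc G ≤ k`,
this is not satisfied through the junk value `rc G = 0` of a disconnected graph. -/
def RainbowColorable (G : SimpleGraph V) (k : ℕ) : Prop :=
  ∃ c : Sym2 V → ℕ, (∀ e ∈ G.edgeSet, c e < k) ∧ RainbowConnectedUnder G c

theorem RainbowColorable.rc_le (h : RainbowColorable G k) : rc G ≤ k :=
  Nat.sInf_le h

theorem RainbowColorable.mono (h : RainbowColorable H k) (hHG : H ≤ G) :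
    RainbowColorable G k := by
  classical
  obtain ⟨c, hc, hrainbow⟩ := h
  have k_pos {u v : V} (huv : G.Adj u v) : 0 < k := by
    obtain ⟨p, -⟩ := hrainbow u v
    cases p with
    | nil => exact (G.irrefl huv).elim
    | cons hadj _ => exact (Nat.zero_le _).trans_lt (hc s(_, _) hadj)
  refine ⟨fun e => if e ∈ H.edgeSet then c e else 0, ?_, fun u v => ?_⟩
  · refine Sym2.ind fun u v huv => ?_
    dsimp only
    split_ifs with he
    exacts [hc _ he, k_pos huv]
  · obtain ⟨p, hpath, hnodup⟩ := hrainbow u v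
    refine ⟨p.mapLe hHG, hpath.mapLe hHG, ?_⟩
    rw [Walk.edges_mapLe_eq_edges]
    convert hnodup using 1
    exact List.map_congr_left fun e he => if_pos (p.edges_subset_edgeSet he)

theorem rainbowColorable_card_edgeSet [Finite G.edgeSet] (hG : G.Preconnected) :
    RainbowColorable G (Nat.card G.edgeSet) := by
  classical
  let c : Sym2 V → ℕ :=
    Function.extend Subtype.val (fun e : G.edgeSet => (Finite.equivFin G.edgeSet e : ℕ)) 0
  have c_apply (e : G.edgeSet) : c e = Finite.equivFin G.edgeSet e :=
    Subtype.val_injective.extend_apply _ _ _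
  have c_injOn : Set.InjOn c G.edgeSet := fun e he e' he' hee' => by
    rw [c_apply ⟨e, he⟩, c_apply ⟨e', he'⟩] at hee'
    simpa using (Finite.equivFin G.edgeSet).injective (Fin.ext hee')
  refine ⟨c, fun e he => ?_, fun u v => ?_⟩
  · rw [c_apply ⟨e, he⟩]
    exact Fin.is_lt _
  · obtain ⟨p⟩ := hG u v
    exact ⟨p.bypass, p.bypass_isPath, p.bypass_isPath.isTrail.edges_nodup.map_on
      fun e he e' he' => c_injOn (Walk.edges_subset_edgeSet _ he)
        (Walk.edges_subset_edgeSet _ he')⟩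

theorem rainbowColorable_card_sub_one [Finite V] (hG : G.Connected) :
    RainbowColorable G (Nat.card V - 1) := by
  obtain ⟨T, hTG, hT⟩ := hG.exists_isTree_le
  have hcard : Nat.card T.edgeSet = Nat.card V - 1 := by
    have := (isTree_iff_connected_and_card.mp hT).2
    omega
  exact hcard ▸ (rainbowColorable_card_edgeSet hT.connected.preconnected).mono hTG

end RainbowColorable

section Domination

variable {G : SimpleGraph V} {D D' : Set V} {v w : V}

/-- The closed neighbourhood `N[D]` of a set of vertices. -/
def closedNbhd (G : SimpleGraph V) (D : Set V) : Set V :=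
  {v | v ∈ D ∨ ∃ d ∈ D, G.Adj v d}

/-- The set `N¹(D)` of vertices at distance exactly one from `D`. -/
def openNbhd (G : SimpleGraph V) (D : Set V) : Set V :=
  closedNbhd G D \ D

/-- `D` is a two-way two-step dominating set: every vertex outside `N[D]` has two neighbours in
`N[D]`, and the vertices with fewer than two neighbours lie in `D`. -/
structure IsTwoWayTwoStepDominating (G : SimpleGraph V) (D : Set V) : Prop where
  nontrivial_neighborSet : ∀ v ∉ D, (G.neighborSet v).Nontrivial
  nontrivial_inter : ∀ v ∉ closedNbhd G D, (G.neighborSet v ∩ closedNbhd G D).Nontrivial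

theorem subset_closedNbhd : D ⊆ closedNbhd G D :=
  fun _ => Or.inl

theorem mem_closedNbhd_of_adj (hw : w ∈ D) (h : G.Adj v w) : v ∈ closedNbhd G D :=
  Or.inr ⟨w, hw, h⟩

theorem closedNbhd_mono (h : D ⊆ D') : closedNbhd G D ⊆ closedNbhd G D' := by
  rintro v (hv | ⟨d, hd, hvd⟩)
  exacts [subset_closedNbhd (h hv), mem_closedNbhd_of_adj (h hd) hvd]

theorem mem_openNbhd_of_adj (hv : v ∉ closedNbhd G D) (hw : w ∈ closedNbhd G D)
    (h : G.Adj v w) : w ∈ openNbhd G D :=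
  ⟨hw, fun hwD => hv (mem_closedNbhd_of_adj hwD h)⟩

theorem exists_adj_of_mem_openNbhd (hv : v ∈ openNbhd G D) : ∃ d ∈ D, G.Adj v d :=
  hv.1.resolve_left hv.2

theorem closedNbhd_singleton (v : V) : closedNbhd G {v} = insert v (G.neighborSet v) := by
  ext w
  simp [closedNbhd, G.adj_comm w]

theorem ncard_closedNbhd_singleton [Finite V] (v : V) :
    (closedNbhd G {v}).ncard = deg G v + 1 := by
  rw [closedNbhd_singleton, Set.ncard_insert_of_notMem (by simp), deg]

end Domination

section Layers

theorem exists_side_ne_of_not_isIsolated (K : SimpleGraph V) :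
    ∃ side : V → Bool, ∀ v, ¬ K.IsIsolated v → ∃ w, K.Adj v w ∧ side w ≠ side v := by
  obtain ⟨F, hFK, hF, hreach⟩ := K.exists_isAcyclic_reachable_eq_le
  let side : F.Coloring Bool := hF.colorable_two.toColoring (by simp)
  refine ⟨side, fun v hv => ?_⟩
  obtain ⟨u, hvu⟩ := exists_adj_iff_not_isIsolated.mpr hv
  obtain ⟨p⟩ : F.Reachable v u := hreach ▸ hvu.reachable
  cases p with
  | nil => exact (K.irrefl hvu).elim
  | cons hvw _ => exact ⟨_, hFK hvw, (side.valid hvw).symm⟩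

/-- The edge colouring that gives an edge between two levels of `lev` the colour `g outer inner`,
where `outer` is its endpoint of higher level, and an edge `e` inside a level the colour `h e`. -/
def levelColoring (lev : V → ℕ) (g : V → V → α) (h : Sym2 V → α) : Sym2 V → α :=
  Sym2.lift ⟨fun u v =>
    if lev v < lev u then g u v else if lev u < lev v then g v u else h s(u, v), fun u v => by
      dsimp only
      rw [Sym2.eq_swap]
      split_ifs <;> first | rfl | omega⟩

variable {lev : V → ℕ} {g : V → V → α} {h : Sym2 V → α} {u v : V}

theorem levelColoring_of_lt (huv : lev v < lev u) : levelColoring lev g h s(u, v) = g u v := by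
  simp [levelColoring, huv]

theorem levelColoring_of_eq (huv : lev u = lev v) :
    levelColoring lev g h s(u, v) = h s(u, v) := by
  simp [levelColoring, huv]

open Classical in
/-- The distance of a vertex to `D`, with all distances beyond `1` reported as `2`. -/
noncomputable def shellLevel (G : SimpleGraph V) (D : Set V) (v : V) : ℕ :=
  if v ∈ D then 0 else if v ∈ closedNbhd G D then 1 else 2

variable {G : SimpleGraph V} {D : Set V}

theorem shellLevel_of_mem (hv : v ∈ D) : shellLevel G D v = 0 :=
  if_pos hv

theorem shellLevel_of_mem_openNbhd (hv : v ∈ openNbhd G D) : shellLevel G D v = 1 := by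
  rw [shellLevel, if_neg hv.2, if_pos hv.1]

theorem shellLevel_of_notMem_closedNbhd (hv : v ∉ closedNbhd G D) : shellLevel G D v = 2 := by
  rw [shellLevel, if_neg fun h => hv (subset_closedNbhd h), if_neg hv]

/-- The graph on `N¹(D)` in which two vertices are linked when they are adjacent in `G` or have a
common neighbour outside `N[D]`. -/
def shellGraph (G : SimpleGraph V) (D : Set V) : SimpleGraph V where
  Adj a a' := a ≠ a' ∧ a ∈ openNbhd G D ∧ a' ∈ openNbhd G D ∧
    (G.Adj a a' ∨ ∃ b ∉ closedNbhd G D, G.Adj a b ∧ G.Adj a' b)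
  symm := ⟨fun _ _ ⟨hne, ha, ha', h⟩ =>
    ⟨hne.symm, ha', ha, h.imp Adj.symm fun ⟨b, hb, hab, ha'b⟩ => ⟨b, hb, ha'b, hab⟩⟩⟩
  loopless := ⟨fun _ h => h.1 rfl⟩

theorem exists_shellGraph_adj (hD : IsTwoWayTwoStepDominating G D) {a w : V}
    (ha : a ∈ openNbhd G D) (hw : w ∉ D) (haw : G.Adj a w) : ∃ a', (shellGraph G D).Adj a a' := by
  by_cases hwcl : w ∈ closedNbhd G D
  · exact ⟨w, haw.ne, ha, ⟨hwcl, hw⟩, Or.inl haw⟩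
  · obtain ⟨a', ⟨hwa', ha'⟩, hne⟩ := (hD.nontrivial_inter w hwcl).exists_ne a
    exact ⟨a', hne.symm, ha, mem_openNbhd_of_adj hwcl ha' hwa', Or.inr ⟨w, hwcl, haw, hwa'.symm⟩⟩

/-- The choices that determine the colouring outside `D`: a bipartition `side` of `N¹(D)`, for each
vertex of `N¹(D)` a neighbour `anchor` in `D`, and for each vertex outside `N[D]` a neighbour `gate`
in `N¹(D)`. -/
structure ShellScheme (G : SimpleGraph V) (D : Set V) where
  side : V → Bool
  anchor : V → V
  gate : V → V
  anchor_mem : ∀ a ∈ openNbhd G D, anchor a ∈ D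
  adj_anchor : ∀ a ∈ openNbhd G D, G.Adj a (anchor a)
  gate_mem : ∀ b ∉ closedNbhd G D, gate b ∈ openNbhd G D
  adj_gate : ∀ b ∉ closedNbhd G D, G.Adj b (gate b)
  exists_spoke_or_link : ∀ a ∈ openNbhd G D,
    (∃ d ∈ D, G.Adj a d ∧ d ≠ anchor a) ∨ ∃ a', (shellGraph G D).Adj a a' ∧ side a' ≠ side a

theorem IsTwoWayTwoStepDominating.nonempty_shellScheme (hD : IsTwoWayTwoStepDominating G D) :
    Nonempty (ShellScheme G D) := by
  obtain ⟨side, hside⟩ := exists_side_ne_of_not_isIsolated (shellGraph G D)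
  choose! anchor anchor_mem adj_anchor using
    fun (a : V) (ha : a ∈ openNbhd G D) => exists_adj_of_mem_openNbhd ha
  have exists_gate (b : V) (hb : b ∉ closedNbhd G D) : ∃ a ∈ openNbhd G D, G.Adj b a := by
    obtain ⟨a, hba, ha⟩ := (hD.nontrivial_inter b hb).nonempty
    exact ⟨a, mem_openNbhd_of_adj hb ha hba, hba⟩
  choose! gate gate_mem adj_gate using exists_gate
  refine ⟨side, anchor, gate, anchor_mem, adj_anchor, gate_mem, adj_gate, fun a ha => ?_⟩
  obtain ⟨w, haw, hw⟩ := (hD.nontrivial_neighborSet a ha.2).exists_ne (anchor a)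
  by_cases hwD : w ∈ D
  · exact Or.inl ⟨w, hwD, haw, hw⟩
  · exact Or.inr (hside a (exists_adj_iff_not_isIsolated.mp (exists_shellGraph_adj hD ha hwD haw)))

end Layers

namespace ShellScheme

variable {G : SimpleGraph V} {D : Set V} (σ : ShellScheme G D) {a a' b d : V}

/-- `b` has neighbours in `N¹(D)` on both sides. -/
def IsMixed (b : V) : Prop :=
  ∀ i : Bool, ∃ a ∈ openNbhd G D, G.Adj b a ∧ σ.side a = i

/-- `a` can reach `D` while avoiding the colour of its own side and the vertices outside `N[D]`:
through a second neighbour in `D` or through an adjacent vertex of `N¹(D)` on the other side. -/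
def HasShortcut (a : V) : Prop :=
  (∃ d ∈ D, G.Adj a d ∧ d ≠ σ.anchor a) ∨
    ∃ a' ∈ openNbhd G D, G.Adj a a' ∧ σ.side a' ≠ σ.side a

open Classical in
/-- The colour of an edge from `v` to a vertex `u` that is closer to `D`. The colours `0` and `1`
are used at `D`, and `2`, …, `5` further out. -/
noncomputable def descentColor (v u : V) : ℕ :=
  if u ∈ D then (if u = σ.anchor v then (σ.side v).toNat else (!σ.side v).toNat)
  else if σ.IsMixed v then 3 + (σ.side u).toNat
  else if u = σ.gate v then 5 else if σ.HasShortcut u then 3 else 2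

/-- The extension of an edge colouring `c₀` of `G[D]` to `G` by the six new colours `0, …, 5`; the
colours of `c₀` are shifted by `6` to make room. -/
noncomputable def color (c₀ : Sym2 D → ℕ) : Sym2 V → ℕ :=
  levelColoring (shellLevel G D) σ.descentColor
    (Function.extend (Sym2.map Subtype.val) (fun e => c₀ e + 6) fun _ => 2)

variable (c₀ : Sym2 D → ℕ)

theorem color_map_val (e : Sym2 D) : σ.color c₀ (e.map Subtype.val) = c₀ e + 6 := by
  have hinj := Sym2.map.injective (Subtype.val_injective (p := (· ∈ D)))
  induction e with
  | _ x y =>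
    refine (levelColoring_of_eq ?_).trans (hinj.extend_apply _ _ s(x, y))
    rw [shellLevel_of_mem x.2, shellLevel_of_mem y.2]

theorem color_anchor (ha : a ∈ openNbhd G D) :
    σ.color c₀ s(a, σ.anchor a) = (σ.side a).toNat := by
  have hd := σ.anchor_mem a ha
  rw [color, levelColoring_of_lt (by simp [shellLevel_of_mem, shellLevel_of_mem_openNbhd, ha, hd])]
  simp [descentColor, hd]

theorem color_spoke (ha : a ∈ openNbhd G D) (hd : d ∈ D) (hne : d ≠ σ.anchor a) :
    σ.color c₀ s(a, d) = (!σ.side a).toNat := by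
  rw [color, levelColoring_of_lt (by simp [shellLevel_of_mem, shellLevel_of_mem_openNbhd, ha, hd])]
  simp [descentColor, hd, hne]

theorem color_openNbhd (ha : a ∈ openNbhd G D) (ha' : a' ∈ openNbhd G D) :
    σ.color c₀ s(a, a') = 2 := by
  rw [color, levelColoring_of_eq (by simp [shellLevel_of_mem_openNbhd, ha, ha'])]
  refine Function.extend_apply' _ _ _ fun ⟨e, he⟩ => ha.2 ?_
  obtain ⟨d, -, hd⟩ := Sym2.mem_map.mp (he ▸ Sym2.mem_mk_left a a')
  exact hd ▸ d.2

theorem color_eq_descentColor (ha : a ∈ openNbhd G D) (hb : b ∉ closedNbhd G D) :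
    σ.color c₀ s(b, a) = σ.descentColor b a :=
  levelColoring_of_lt
    (by simp [shellLevel_of_notMem_closedNbhd, shellLevel_of_mem_openNbhd, ha, hb])

theorem color_of_isMixed (ha : a ∈ openNbhd G D) (hb : b ∉ closedNbhd G D) (hmix : σ.IsMixed b) :
    σ.color c₀ s(b, a) = 3 + (σ.side a).toNat := by
  simp [color_eq_descentColor, ha, hb, descentColor, ha.2, hmix]

theorem color_gate (hb : b ∉ closedNbhd G D) (hmix : ¬ σ.IsMixed b) :
    σ.color c₀ s(b, σ.gate b) = 5 := by
  have ha := σ.gate_mem b hb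
  simp [color_eq_descentColor, ha, hb, descentColor, ha.2, hmix]

open Classical in
theorem color_of_ne_gate (ha : a ∈ openNbhd G D) (hb : b ∉ closedNbhd G D)
    (hmix : ¬ σ.IsMixed b) (hne : a ≠ σ.gate b) :
    σ.color c₀ s(b, a) = if σ.HasShortcut a then 3 else 2 := by
  simp [color_eq_descentColor, ha, hb, descentColor, ha.2, hmix, hne]

theorem descentColor_lt (v u : V) : σ.descentColor v u < 6 := by
  have (i : Bool) : i.toNat ≤ 1 := i.toNat_le
  grind [descentColor]

theorem color_lt {k : ℕ} (hc₀ : ∀ e ∈ (G.induce D).edgeSet, c₀ e < k) :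
    ∀ e ∈ G.edgeSet, σ.color c₀ e < k + 6 := by
  intro e he
  by_cases hrange : ∃ e₀ : Sym2 D, e₀.map Subtype.val = e
  · obtain ⟨e₀, rfl⟩ := hrange
    have := hc₀ e₀ ((Embedding.induce D).map_mem_edgeSet_iff.mp he)
    rw [color_map_val]
    omega
  · suffices σ.color c₀ e < 6 by omega
    induction e with
    | _ u v =>
      rcases lt_trichotomy (shellLevel G D v) (shellLevel G D u) with hlt | heq | hlt
      · exact (levelColoring_of_lt hlt).trans_lt (σ.descentColor_lt u v)
      · rw [color, levelColoring_of_eq heq.symm, Function.extend_apply' _ _ _ hrange]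
        decide
      · exact Sym2.eq_swap ▸ (levelColoring_of_lt hlt).trans_lt (σ.descentColor_lt v u)

theorem rainbowReachable_of_mem {k : ℕ} (hc₀ : ∀ e ∈ (G.induce D).edgeSet, c₀ e < k)
    (hrainbow : RainbowConnectedUnder (G.induce D) c₀) {d d' : V} (hd : d ∈ D) (hd' : d' ∈ D) :
    RainbowReachable G (σ.color c₀) (Finset.Ico 6 (k + 6)) d d' := by
  obtain ⟨p, -, hp⟩ := hrainbow ⟨d, hd⟩ ⟨d', hd'⟩
  obtain ⟨q, hq⟩ : ∃ q : G.Walk d d', q.edges = p.edges.map (Sym2.map Subtype.val) :=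
    ⟨p.map (Embedding.induce D).toHom, p.edges_map _⟩
  refine ⟨q, ?_, fun e he => ?_⟩
  · have hcolors : q.edges.map (σ.color c₀) = (p.edges.map c₀).map (· + 6) := by
      rw [hq, List.map_map, List.map_map]
      exact List.map_congr_left fun e _ => σ.color_map_val c₀ e
    exact hcolors ▸ hp.map (add_left_injective 6)
  · obtain ⟨e₀, he₀, rfl⟩ := List.mem_map.mp (hq ▸ he)
    have := hc₀ e₀ (p.edges_subset_edgeSet he₀)
    rw [color_map_val, Finset.mem_Ico]
    omega

end ShellScheme

section HasExit

variable {G : SimpleGraph V} {D : Set V} {c : Sym2 V → α} {S T : Finset α} {v w : V}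

/-- `v` can be joined to `D` by a walk with distinct colours from `S`. -/
def HasExit (G : SimpleGraph V) (D : Set V) (c : Sym2 V → α) (S : Finset α) (v : V) : Prop :=
  ∃ d ∈ D, RainbowReachable G c S v d

theorem hasExit_of_mem (hv : v ∈ D) : HasExit G D c S v :=
  ⟨v, hv, .refl v⟩

theorem HasExit.mono (h : HasExit G D c S v) (hST : S ⊆ T) : HasExit G D c T v := by
  obtain ⟨d, hd, hvd⟩ := h
  exact ⟨d, hd, hvd.mono hST⟩

theorem HasExit.cons [DecidableEq α] {x : α} (h : HasExit G D c S w) (hvw : G.Adj v w)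
    (hx : c s(v, w) = x) (hxS : x ∉ S) : HasExit G D c (insert x S) v := by
  obtain ⟨d, hd, hwd⟩ := h
  subst hx
  exact ⟨d, hd, (RainbowReachable.of_adj hvw).trans hwd (Finset.disjoint_singleton_left.mpr hxS)⟩

theorem HasExit.rainbowReachable [DecidableEq α] {C : Finset α} (hv : HasExit G D c S v)
    (hw : HasExit G D c T w) (hD : ∀ d ∈ D, ∀ d' ∈ D, RainbowReachable G c C d d')
    (hST : Disjoint S T) (hSC : Disjoint S C) (hTC : Disjoint T C) :
    RainbowReachable G c (S ∪ (C ∪ T)) v w := by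
  obtain ⟨d, hd, hvd⟩ := hv
  obtain ⟨d', hd', hwd'⟩ := hw
  exact hvd.trans ((hD d hd d' hd').trans hwd'.symm hTC.symm)
    (Finset.disjoint_union_right.mpr ⟨hSC, hST⟩)

/-- The exits through the colours `0, …, 5` that every vertex turns out to have: either one through
each of `{0, 3}` and `{1, 4}`, or one through `{0, 5}` or `{1, 5}` and both through `{0, 2, 3, 4}`
and `{1, 2, 3, 4}`. The two sides of `N¹(D)` enter as `false = 0` and `true = 1`. -/
def HasExitProfile (G : SimpleGraph V) (D : Set V) (c : Sym2 V → ℕ) (v : V) : Prop :=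
  (∀ i : Bool, HasExit G D c {i.toNat, 3 + i.toNat} v) ∨
    (∃ i : Bool, HasExit G D c {i.toNat, 5} v) ∧ ∀ i : Bool, HasExit G D c {i.toNat, 2, 3, 4} v

theorem HasExitProfile.exists_disjoint {c : Sym2 V → ℕ} (hv : HasExitProfile G D c v)
    (hw : HasExitProfile G D c w) :
    ∃ S ⊆ Finset.range 6, ∃ T ⊆ Finset.range 6, Disjoint S T ∧
      HasExit G D c S v ∧ HasExit G D c T w := by
  rcases hv with hv | ⟨⟨i, hvi⟩, -⟩ <;> rcases hw with hw | ⟨⟨j, hwj⟩, hw⟩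
  · exact ⟨_, by decide, _, by decide, by decide, hv false, hw true⟩
  · refine ⟨_, ?_, _, ?_, ?_, hv (!j), hwj⟩ <;> cases j <;> decide
  · refine ⟨_, ?_, _, ?_, ?_, hvi, hw (!i)⟩ <;> cases i <;> decide
  · refine ⟨_, ?_, _, ?_, ?_, hvi, hw (!i)⟩ <;> cases i <;> decide

end HasExit

namespace ShellScheme

variable {G : SimpleGraph V} {D : Set V} (σ : ShellScheme G D) (c₀ : Sym2 D → ℕ) {a b : V}

theorem hasExit_side (ha : a ∈ openNbhd G D) :
    HasExit G D (σ.color c₀) {(σ.side a).toNat} a :=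
  (hasExit_of_mem (S := ∅) (σ.anchor_mem a ha)).cons (σ.adj_anchor a ha) (σ.color_anchor c₀ ha)
    (Finset.notMem_empty _)

theorem hasExit_of_hasShortcut (ha : a ∈ openNbhd G D) (h : σ.HasShortcut a) :
    HasExit G D (σ.color c₀) {(!σ.side a).toNat, 2} a := by
  rcases h with ⟨d, hd, had, hne⟩ | ⟨a', ha', haa', hside⟩
  · exact ((hasExit_of_mem (S := ∅) hd).cons had (σ.color_spoke c₀ ha hd hne)
      (Finset.notMem_empty _)).mono (by simp)
  · have hside' : σ.side a' = !σ.side a := Bool.eq_not.mpr hside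
    refine ((σ.hasExit_side c₀ ha').cons haa' (σ.color_openNbhd c₀ ha ha') ?_).mono ?_ <;>
      cases h : σ.side a <;> simp only [hside', h] <;> decide

theorem hasExit_of_not_hasShortcut (ha : a ∈ openNbhd G D) (h : ¬ σ.HasShortcut a) :
    HasExit G D (σ.color c₀) {(!σ.side a).toNat, 3, 4} a := by
  obtain ⟨a', ⟨-, -, ha', hlink⟩, hside⟩ :=
    (σ.exists_spoke_or_link a ha).resolve_left fun hspoke => h (Or.inl hspoke)
  obtain ⟨b, hb, hab, ha'b⟩ :=
    hlink.resolve_left fun haa' => h (Or.inr ⟨a', ha', haa', hside⟩)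
  have hside' : σ.side a' = !σ.side a := Bool.eq_not.mpr hside
  have hmix : σ.IsMixed b := fun i => by
    rcases eq_or_ne (σ.side a) i with hi | hi
    · exact ⟨a, ha, hab.symm, hi⟩
    · exact ⟨a', ha', ha'b.symm, hside'.trans (Bool.not_eq.mpr hi)⟩
  have hexit := (σ.hasExit_side c₀ ha').cons ha'b.symm (σ.color_of_isMixed c₀ ha' hb hmix) (by simp)
  refine (hexit.cons hab (Sym2.eq_swap ▸ σ.color_of_isMixed c₀ ha hb hmix) ?_).mono ?_ <;>
    cases h : σ.side a <;> simp only [hside', h] <;> decide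

theorem hasExit_not_side (ha : a ∈ openNbhd G D) :
    HasExit G D (σ.color c₀) {(!σ.side a).toNat, 2, 3, 4} a := by
  by_cases h : σ.HasShortcut a
  · exact (σ.hasExit_of_hasShortcut c₀ ha h).mono (by grind)
  · exact (σ.hasExit_of_not_hasShortcut c₀ ha h).mono (by grind)

theorem hasExit_of_isMixed (hb : b ∉ closedNbhd G D) (hmix : σ.IsMixed b) (i : Bool) :
    HasExit G D (σ.color c₀) {i.toNat, 3 + i.toNat} b := by
  obtain ⟨a, ha, hba, rfl⟩ := hmix i
  exact ((σ.hasExit_side c₀ ha).cons hba (σ.color_of_isMixed c₀ ha hb hmix) (by simp)).mono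
    (Finset.pair_comm _ _).subset

theorem hasExit_gate (hb : b ∉ closedNbhd G D) (hmix : ¬ σ.IsMixed b) :
    HasExit G D (σ.color c₀) {(σ.side (σ.gate b)).toNat, 5} b := by
  refine ((σ.hasExit_side c₀ (σ.gate_mem b hb)).cons (σ.adj_gate b hb)
    (σ.color_gate c₀ hb hmix) ?_).mono (Finset.pair_comm _ _).subset
  cases σ.side (σ.gate b) <;> decide

/-- The colour of the edge from `b` to `a` is the one among `2` and `3` that the exit of `a` on the
opposite side leaves free. -/
theorem hasExit_of_ne_gate (ha : a ∈ openNbhd G D) (hb : b ∉ closedNbhd G D) (hba : G.Adj b a)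
    (hmix : ¬ σ.IsMixed b) (hne : a ≠ σ.gate b) (i : Bool) :
    HasExit G D (σ.color c₀) {i.toNat, 2, 3, 4} b := by
  have hcolor := σ.color_of_ne_gate c₀ ha hb hmix hne
  have hside := σ.hasExit_side c₀ ha
  have hlt (i : Bool) : i.toNat < 2 := i.toNat_lt
  rcases Bool.eq_or_eq_not i (σ.side a) with rfl | rfl
  · refine (hside.cons hba hcolor ?_).mono ?_ <;> grind
  · by_cases h : σ.HasShortcut a
    · rw [if_pos h] at hcolor
      refine ((σ.hasExit_of_hasShortcut c₀ ha h).cons hba hcolor ?_).mono ?_ <;> grind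
    · rw [if_neg h] at hcolor
      refine ((σ.hasExit_of_not_hasShortcut c₀ ha h).cons hba hcolor ?_).mono ?_ <;> grind

theorem hasExitProfile (hD : IsTwoWayTwoStepDominating G D) (v : V) :
    HasExitProfile G D (σ.color c₀) v := by
  by_cases hvD : v ∈ D
  · exact Or.inl fun _ => hasExit_of_mem hvD
  by_cases hv : v ∈ closedNbhd G D
  · have hside := σ.hasExit_side c₀ (a := v) ⟨hv, hvD⟩
    refine Or.inr ⟨⟨σ.side v, hside.mono (by simp)⟩, fun i => ?_⟩
    rcases Bool.eq_or_eq_not i (σ.side v) with rfl | rfl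
    · exact hside.mono (by simp)
    · exact σ.hasExit_not_side c₀ ⟨hv, hvD⟩
  by_cases hmix : σ.IsMixed v
  · exact Or.inl (σ.hasExit_of_isMixed c₀ hv hmix)
  · obtain ⟨a, ⟨hva, ha⟩, hne⟩ := (hD.nontrivial_inter v hv).exists_ne (σ.gate v)
    exact Or.inr ⟨⟨_, σ.hasExit_gate c₀ hv hmix⟩,
      σ.hasExit_of_ne_gate c₀ (mem_openNbhd_of_adj hv ha hva) hv hva hmix hne⟩

end ShellScheme

theorem RainbowColorable.add_six_of_induce {G : SimpleGraph V} {D : Set V} {k : ℕ}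
    (hD : IsTwoWayTwoStepDominating G D) (h : RainbowColorable (G.induce D) k) :
    RainbowColorable G (k + 6) := by
  obtain ⟨c₀, hc₀, hrainbow⟩ := h
  obtain ⟨σ⟩ := hD.nonempty_shellScheme
  refine ⟨σ.color c₀, σ.color_lt c₀ hc₀, fun u v => ?_⟩
  obtain ⟨S, hS, T, hT, hST, hu, hv⟩ :=
    (σ.hasExitProfile c₀ hD u).exists_disjoint (σ.hasExitProfile c₀ hD v)
  have hcore : Disjoint (Finset.range 6) (Finset.Ico 6 (k + 6)) := by
    rw [Finset.range_eq_Ico]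
    exact Finset.Ico_disjoint_Ico_consecutive 0 6 (k + 6)
  exact (hu.rainbowReachable hv
    (fun _ hd _ hd' => σ.rainbowReachable_of_mem c₀ hc₀ hrainbow hd hd')
    hST (hcore.mono_left hS) (hcore.mono_left hT)).exists_isPath

section Economical

variable {G : SimpleGraph V} {D D' : Set V} {δ : ℕ}

theorem connected_induce_insert {d x : V} (hD : (G.induce D).Connected) (hd : d ∈ D)
    (hdx : G.Adj d x) : (G.induce (insert x D)).Connected := by
  rw [← Set.union_singleton]
  exact connected_induce_union hD.preconnected .of_subsingleton hd (Set.mem_singleton x) hdx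

/-- `D` induces a connected subgraph and is small compared to its closed neighbourhood: each new
vertex of `D` has been paid for by `(δ + 1) / 3` new vertices of `N[D]`. -/
structure IsEconomical (G : SimpleGraph V) (δ : ℕ) (D : Set V) : Prop where
  connected : (G.induce D).Connected
  mul_ncard_le : (δ + 1) * (D.ncard + 2) ≤ 3 * (closedNbhd G D).ncard

theorem isEconomical_singleton [Finite V] {v : V} (hv : δ ≤ deg G v) : IsEconomical G δ {v} where
  connected := ⟨.of_subsingleton⟩
  mul_ncard_le := by
    rw [Set.ncard_singleton, ncard_closedNbhd_singleton]
    omega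

theorem IsEconomical.enlarge [Finite V] (hD : IsEconomical G δ D) {v : V} {A : Set V} {m : ℕ}
    (hconn : (G.induce D').Connected) (hDD' : D ⊆ D') (hv : v ∈ D') (hA : A ⊆ closedNbhd G {v})
    (hdisj : Disjoint (closedNbhd G D) A) (hcard : D'.ncard ≤ D.ncard + m)
    (hm : (δ + 1) * m ≤ 3 * A.ncard) : IsEconomical G δ D' where
  connected := hconn
  mul_ncard_le := by
    have hsub : closedNbhd G D ∪ A ⊆ closedNbhd G D' :=
      Set.union_subset (closedNbhd_mono hDD')
        (hA.trans (closedNbhd_mono (Set.singleton_subset_iff.mpr hv)))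
    calc (δ + 1) * (D'.ncard + 2) ≤ (δ + 1) * (D.ncard + m + 2) := by gcongr
      _ = (δ + 1) * (D.ncard + 2) + (δ + 1) * m := by ring
      _ ≤ 3 * (closedNbhd G D).ncard + 3 * A.ncard := add_le_add hD.mul_ncard_le hm
      _ = 3 * (closedNbhd G D ∪ A).ncard := by rw [Set.ncard_union_eq hdisj]; ring
      _ ≤ 3 * (closedNbhd G D').ncard := by gcongr; exact Set.toFinite _

theorem exists_adj_notMem_of_ne_univ (hG : G.Preconnected) {S : Set V} (hS : S.Nonempty)
    (hne : S ≠ Set.univ) : ∃ x ∈ S, ∃ y ∉ S, G.Adj x y := by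
  obtain ⟨u, hu⟩ := hS
  obtain ⟨v, hv⟩ := (Set.ne_univ_iff_exists_notMem S).mp hne
  obtain ⟨p⟩ := hG u v
  obtain ⟨e, -, hfst, hsnd⟩ := p.exists_boundary_dart S hu hv
  exact ⟨_, hfst, _, hsnd, e.adj⟩

/-- A vertex `v` at distance three from `D` is added together with a path to `D`; its whole closed
neighbourhood is new. -/
theorem IsEconomical.exists_ssuperset_of_ne_univ [Finite V] (hG : G.Preconnected)
    (hδ : ∀ v, δ ≤ deg G v) (hD : IsEconomical G δ D)
    (hne : closedNbhd G (closedNbhd G D) ≠ Set.univ) : ∃ D', D ⊂ D' ∧ IsEconomical G δ D' := by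
  obtain ⟨⟨d₀, hd₀⟩⟩ := hD.connected.nonempty
  obtain ⟨w, hw, v, hv, hwv⟩ := exists_adj_notMem_of_ne_univ hG
    ⟨d₀, subset_closedNbhd (subset_closedNbhd hd₀)⟩ hne
  have hwD : w ∉ closedNbhd G D := fun h => hv (mem_closedNbhd_of_adj h hwv.symm)
  obtain ⟨x, hx, hwx⟩ := hw.resolve_left hwD
  obtain ⟨d, hd, hxd⟩ := exists_adj_of_mem_openNbhd (mem_openNbhd_of_adj hwD hx hwx)
  have hconn : (G.induce (insert v (insert w (insert x D)))).Connected :=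
    connected_induce_insert (connected_induce_insert (connected_induce_insert hD.connected hd
      hxd.symm) (Set.mem_insert _ _) hwx.symm) (Set.mem_insert _ _) hwv
  have hsub : D ⊆ insert v (insert w (insert x D)) := by grind
  have hdisj : Disjoint (closedNbhd G D) (closedNbhd G {v}) := by
    rw [Set.disjoint_right, closedNbhd_singleton]
    rintro y (rfl | hvy) hy
    exacts [hv (subset_closedNbhd hy), hv (mem_closedNbhd_of_adj hy hvy)]
  have hcard : (insert v (insert w (insert x D))).ncard ≤ D.ncard + 3 := by
    grind [Set.ncard_insert_le]
  refine ⟨_, (Set.ssubset_iff_of_subset hsub).mpr ⟨v, Set.mem_insert _ _, fun hvD => ?_⟩,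
    hD.enlarge hconn hsub (Set.mem_insert _ _) subset_rfl hdisj hcard ?_⟩
  · exact hv (subset_closedNbhd (subset_closedNbhd hvD))
  · rw [ncard_closedNbhd_singleton, mul_comm]
    gcongr
    exact hδ v

/-- A vertex `v` at distance two from `D` with a single neighbour `x` in `N[D]` is added together
with `x`; its closed neighbourhood apart from `x` is new. -/
theorem IsEconomical.exists_ssuperset_of_subsingleton [Finite V] {v : V} (hδ : δ ≤ deg G v)
    (hδ₂ : 2 ≤ δ) (hD : IsEconomical G δ D) (hv : v ∉ closedNbhd G D)
    (hv' : v ∈ closedNbhd G (closedNbhd G D))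
    (hsub : (G.neighborSet v ∩ closedNbhd G D).Subsingleton) :
    ∃ D', D ⊂ D' ∧ IsEconomical G δ D' := by
  obtain ⟨x, hx, hvx⟩ := hv'.resolve_left hv
  obtain ⟨d, hd, hxd⟩ := exists_adj_of_mem_openNbhd (mem_openNbhd_of_adj hv hx hvx)
  have hconn : (G.induce (insert v (insert x D))).Connected :=
    connected_induce_insert (connected_induce_insert hD.connected hd hxd.symm)
      (Set.mem_insert _ _) hvx.symm
  have hDD' : D ⊆ insert v (insert x D) := by grind
  have hdisj : Disjoint (closedNbhd G D) (closedNbhd G {v} \ {x}) := by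
    rw [Set.disjoint_right, closedNbhd_singleton]
    rintro y ⟨rfl | hvy, hyx⟩ hy
    exacts [hv hy, hyx (hsub ⟨hvy, hy⟩ ⟨hvx, hx⟩)]
  have hcard : (insert v (insert x D)).ncard ≤ D.ncard + 2 := by
    grind [Set.ncard_insert_le]
  have hnew : (closedNbhd G {v} \ {x}).ncard = deg G v := by
    rw [Set.ncard_sdiff_singleton_of_mem (mem_closedNbhd_of_adj (Set.mem_singleton v) hvx.symm),
      ncard_closedNbhd_singleton, Nat.add_sub_cancel]
  refine ⟨_, (Set.ssubset_iff_of_subset hDD').mpr ⟨v, Set.mem_insert _ _, fun hvD => ?_⟩,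
    hD.enlarge hconn hDD' (Set.mem_insert _ _) Set.sdiff_subset hdisj hcard ?_⟩
  · exact hv (subset_closedNbhd hvD)
  · omega

theorem exists_isEconomical_isTwoWayTwoStepDominating [Finite V] (hG : G.Connected)
    (hδ : ∀ v, δ ≤ deg G v) (hδ₂ : 2 ≤ δ) :
    ∃ D, IsEconomical G δ D ∧ IsTwoWayTwoStepDominating G D := by
  obtain ⟨v₀⟩ := hG.nonempty
  obtain ⟨D, hD⟩ := (Set.toFinite {D | IsEconomical G δ D}).exists_maximal
    ⟨{v₀}, isEconomical_singleton (hδ v₀)⟩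
  have no_larger : ¬ ∃ D', D ⊂ D' ∧ IsEconomical G δ D' :=
    fun ⟨_, hDD', hD'⟩ => hD.not_prop_of_gt hDD' hD'
  have htwoStep : closedNbhd G (closedNbhd G D) = Set.univ := by
    by_contra hne
    exact no_larger (hD.prop.exists_ssuperset_of_ne_univ hG.preconnected hδ hne)
  refine ⟨D, hD.prop, fun v _ => ?_, fun v hv => ?_⟩
  · exact (Set.one_lt_ncard_iff_nontrivial).mp (hδ₂.trans (hδ v))
  · by_contra hsub
    exact no_larger (hD.prop.exists_ssuperset_of_subsingleton (hδ v) hδ₂ hv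
      (htwoStep ▸ Set.mem_univ v) (Set.not_nontrivial_iff.mp hsub))

end Economical

theorem succ_mul_rc_le [Finite V] {G : SimpleGraph V} (hG : G.Connected) {δ : ℕ}
    (hδ : ∀ v, δ ≤ deg G v) : (δ + 1) * rc G ≤ 3 * Nat.card V + 3 * (δ + 1) := by
  by_cases hδ₂ : 2 ≤ δ
  · obtain ⟨D, hD, hdom⟩ := exists_isEconomical_isTwoWayTwoStepDominating hG hδ hδ₂
    have hrc : rc G ≤ D.ncard - 1 + 6 :=
      ((rainbowColorable_card_sub_one hD.connected).add_six_of_induce hdom).rc_le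
    have hpos : 0 < D.ncard := (Set.nonempty_coe_sort.mp hD.connected.nonempty).ncard_pos
    calc (δ + 1) * rc G ≤ (δ + 1) * (D.ncard + 2 + 3) := by gcongr; omega
      _ = (δ + 1) * (D.ncard + 2) + 3 * (δ + 1) := by ring
      _ ≤ 3 * (closedNbhd G D).ncard + 3 * (δ + 1) := Nat.add_le_add_right hD.mul_ncard_le _
      _ ≤ 3 * Nat.card V + 3 * (δ + 1) := by gcongr; exact Set.ncard_le_card _
  · have hrc : rc G ≤ Nat.card V - 1 := (rainbowColorable_card_sub_one hG).rc_le
    calc (δ + 1) * rc G ≤ 3 * rc G := by gcongr; omega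
      _ ≤ 3 * Nat.card V + 3 * (δ + 1) := by omega

end RainbowConnection

/-- For every finite connected graph of order `n` and minimum degree
`δ`, `rc(G) ≤ 3n/(δ + 1) + 3`. -/
theorem stmt_15 {V : Type*} [Fintype V] (G : SimpleGraph V) (hG : G.Connected)
    (δ : ℕ) (hδ : ∀ v : V, δ ≤ deg G v) :
    (rc G : ℝ) ≤ 3 * (Fintype.card V : ℝ) / (δ + 1) + 3 := by
  have h : ((δ : ℝ) + 1) * rc G ≤ 3 * Fintype.card V + 3 * (δ + 1) := by
    rw [← Nat.card_eq_fintype_card]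
    exact_mod_cast RainbowConnection.succ_mul_rc_le hG hδ
  have hpos : (0 : ℝ) < δ + 1 := by positivity
  rw [div_add' _ _ _ hpos.ne', le_div_iff₀ hpos]
  linarith
end

section
/- Let G be a finite connected simple chordal graph with no bridges, and let v be a vertex of G of eccentricity r. Then for every l ∈ {0, 1, …, r}, the induced subgraph of G on the set of vertices at graph distance at most l from v is a connected chordal graph with no bridges. -/
open SimpleGraph Set

/-!
Let `xy` be an edge of the ball `B` of radius `l` around `v`. If `x` and `y` are equidistant from
`v`, then geodesics from `v` to `x` and to `y` stay in `B` and avoid `xy`, so `xy` is not a bridge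
of `B`. Otherwise use that in a chordal graph an edge which is not a bridge lies in a triangle: a
shortest path between its ends in the graph without that edge closes up to an induced cycle. The
third vertex `z` of a triangle on `xy` is adjacent to the end closer to `v`, so `z ∈ B`.
-/

section Geodesics

variable {V : Type*} {G : SimpleGraph V} {u v w x y : V}

/-- A shortest walk between its two ends, for the graph distance. -/
def IsGeodesic (p : G.Walk u v) : Prop := p.length = G.dist u v

namespace IsGeodesic

lemma isPath {p : G.Walk u v} (hp : IsGeodesic p) : p.IsPath := p.isPath_of_length_eq_dist hp

lemma of_isSubwalk {p : G.Walk u v} {q : G.Walk x y} (hp : IsGeodesic p) (hqp : q.IsSubwalk p) :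
    IsGeodesic q :=
  length_eq_dist_of_subwalk hp hqp

lemma dist_add_dist {p : G.Walk u v} (hp : IsGeodesic p) (hw : w ∈ p.support) :
    G.dist u w + G.dist w v = G.dist u v := by
  classical
  calc G.dist u w + G.dist w v
      = (p.takeUntil w hw).length + (p.dropUntil w hw).length := by
        rw [hp.of_isSubwalk (p.isSubwalk_takeUntil hw), hp.of_isSubwalk (p.isSubwalk_dropUntil hw)]
    _ = p.length := by rw [← Walk.length_append, p.take_spec hw]
    _ = G.dist u v := hp

lemma dist_getVert {p : G.Walk u v} (hp : IsGeodesic p) {i : ℕ} (hi : i ≤ p.length) :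
    G.dist u (p.getVert i) = i := by
  rw [← hp.of_isSubwalk (p.isSubwalk_take i), Walk.take_length, min_eq_left hi]

lemma adj_getVert_iff {p : G.Walk u v} (hp : IsGeodesic p) {i j : ℕ} (hij : i < j)
    (hj : j ≤ p.length) : G.Adj (p.getVert i) (p.getVert j) ↔ j = i + 1 := by
  refine ⟨fun hadj ↦ ?_, ?_⟩
  · have hdist := hadj.diff_dist_adj (u := u)
    rw [hp.dist_getVert hj, hp.dist_getVert (hij.le.trans hj)] at hdist
    omega
  · rintro rfl
    exact p.adj_getVert_succ hj

lemma dist_induce {s : Set V} {p : G.Walk u v} (hp : IsGeodesic p) (hs : ∀ w ∈ p.support, w ∈ s) :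
    (G.induce s).dist ⟨u, hs u p.start_mem_support⟩ ⟨v, hs v p.end_mem_support⟩ = G.dist u v := by
  obtain ⟨q, hq⟩ := (p.induce s hs).reachable.exists_walk_length_eq_dist
  refine le_antisymm ?_ ?_
  · calc _ ≤ (p.induce s hs).length := dist_le _
      _ = p.length := by rw [← Walk.length_map (Embedding.induce s).toHom, p.map_induce]; rfl
      _ = G.dist u v := hp
  · calc G.dist u v ≤ (q.map (Embedding.induce s).toHom).length := dist_le _
      _ = _ := by rw [Walk.length_map, hq]

lemma notMem_edges_of_dist_eq {p : G.Walk v x} (hp : IsGeodesic p) (hxy : x ≠ y)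
    (hdist : G.dist v x = G.dist v y) : s(x, y) ∉ p.edges := by
  intro hmem
  have hy : y ∈ p.support := p.snd_mem_support_of_mem_edges hmem
  have hyx : G.dist y x = 0 := by
    have := hp.dist_add_dist hy
    omega
  classical
  exact hxy ((p.dropUntil y hy).reachable.dist_eq_zero_iff.mp hyx).symm

end IsGeodesic

end Geodesics

section Bridges

variable {V : Type*} {G : SimpleGraph V} {v x y z : V}

lemma not_isBridge_of_dist_eq (hx : G.Reachable v x) (hy : G.Reachable v y)
    (hdist : G.dist v x = G.dist v y) : ¬ G.IsBridge s(x, y) := by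
  obtain rfl | hxy := eq_or_ne x y
  · simp [isBridge_iff]
  obtain ⟨p, hp : IsGeodesic p⟩ := hx.exists_walk_length_eq_dist
  obtain ⟨q, hq : IsGeodesic q⟩ := hy.exists_walk_length_eq_dist
  have hp_avoids : s(x, y) ∉ p.edges := hp.notMem_edges_of_dist_eq hxy hdist
  have hq_avoids : s(x, y) ∉ q.edges := by
    rw [Sym2.eq_swap]
    exact hq.notMem_edges_of_dist_eq hxy.symm hdist.symm
  rw [isBridge_iff_forall_walk_mem_edges, not_forall]
  exact ⟨p.reverse.append q, by simp [hp_avoids, hq_avoids]⟩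

lemma not_isBridge_of_mem_commonNeighbors (hz : z ∈ G.commonNeighbors x y) :
    ¬ G.IsBridge s(x, y) := by
  obtain ⟨hxz, hyz⟩ := G.mem_commonNeighbors.mp hz
  rw [isBridge_iff_forall_walk_mem_edges, not_forall]
  exact ⟨.cons hxz hyz.symm.toWalk, by simp [hxz.ne, hyz.ne]⟩

end Bridges

section InducedCycles

variable {V : Type*} {G : SimpleGraph V} {x y : V}

lemma cycleGraph_adj_iff_of_lt {n : ℕ} {i j : Fin n} (hij : i < j) :
    (cycleGraph n).Adj i j ↔ (j : ℕ) = i + 1 ∨ (i : ℕ) = 0 ∧ (j : ℕ) + 1 = n := by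
  rw [cycleGraph_adj', Fin.coe_sub_iff_lt.mpr hij, Fin.sub_val_of_le hij.le]
  have : (i : ℕ) < j := hij
  omega

lemma IsGeodesic.sup_edge_adj_getVert_iff {p : G.Walk x y} (hp : IsGeodesic p) {i j : ℕ}
    (hij : i < j) (hj : j ≤ p.length) :
    (G ⊔ edge x y).Adj (p.getVert i) (p.getVert j) ↔ j = i + 1 ∨ i = 0 ∧ j = p.length := by
  have hi : i ≤ p.length := hij.le.trans hj
  have hinj {m k : ℕ} (hm : m ≤ p.length) (hk : k ≤ p.length) :
      p.getVert m = p.getVert k ↔ m = k := hp.isPath.getVert_injOn.eq_iff hm hk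
  have hstart {m : ℕ} (hm : m ≤ p.length) : p.getVert m = x ↔ m = 0 := by
    simpa using hinj hm p.length.zero_le
  have hend {m : ℕ} (hm : m ≤ p.length) : p.getVert m = y ↔ m = p.length := by
    simpa using hinj hm le_rfl
  rw [sup_adj, hp.adj_getVert_iff hij hj, edge_adj, hstart hi, hstart hj, hend hi, hend hj, Ne,
    hinj hi hj]
  omega

lemma cycleGraph_isIndContained_sup_edge (h : G.Reachable x y) :
    cycleGraph (G.dist x y + 1) ⊴ G ⊔ edge x y := by
  obtain ⟨p, hp⟩ := h.exists_walk_length_eq_dist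
  rw [← hp]
  replace hp : IsGeodesic p := hp
  have hinj : Function.Injective fun i : Fin (p.length + 1) ↦ p.getVert i :=
    fun i j hij ↦ Fin.ext (hp.isPath.getVert_injOn i.is_le j.is_le hij)
  have hadj {i j : Fin (p.length + 1)} (hij : i < j) :
      (G ⊔ edge x y).Adj (p.getVert i) (p.getVert j) ↔ (cycleGraph (p.length + 1)).Adj i j := by
    rw [hp.sup_edge_adj_getVert_iff hij j.is_le, cycleGraph_adj_iff_of_lt hij,
      Nat.add_right_cancel_iff]
  refine ⟨⟨⟨_, hinj⟩, fun {i j} ↦ ?_⟩⟩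
  obtain hij | rfl | hij := lt_trichotomy i j
  · exact hadj hij
  · simp
  · rw [adj_comm, (cycleGraph _).adj_comm]
    exact hadj hij

end InducedCycles

section Chordal

variable {V W : Type*} {G : SimpleGraph V} {H : SimpleGraph W} {x y : V}

namespace IsChordal

lemma of_isIndContained (hG : IsChordal G) (hHG : H ⊴ G) : IsChordal H :=
  fun n hn ↦ ⟨fun f ↦ not_isEmpty_iff.mpr (IsIndContained.trans ⟨f⟩ hHG) (hG n hn)⟩

lemma dist_le_two_of_sup_edge (hG : IsChordal (G ⊔ edge x y)) (h : G.Reachable x y) :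
    G.dist x y ≤ 2 := by
  by_contra! hlt
  exact not_isEmpty_iff.mpr (cycleGraph_isIndContained_sup_edge h) (hG _ (by omega))

lemma commonNeighbors_nonempty_of_not_isBridge (hG : IsChordal G) (hxy : G.Adj x y)
    (hb : ¬ G.IsBridge s(x, y)) : (G.commonNeighbors x y).Nonempty := by
  set G' := G.deleteEdges {s(x, y)} with hG'
  have hreach : G'.Reachable x y := not_not.mp hb
  have hsup : G' ⊔ edge x y = G := sdiff_sup_cancel (G.edge_le_iff.mpr (.inr hxy))
  have hle : G'.dist x y ≤ 2 := dist_le_two_of_sup_edge (hsup ▸ hG) hreach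
  have hnadj : ¬ G'.Adj x y := by simp [hG']
  have hlt : 1 < G'.dist x y := hreach.one_lt_dist_of_ne_of_not_adj hxy.ne hnadj
  have hdist : G'.edist x y = 2 := by
    rw [← hreach.coe_dist_eq_edist, le_antisymm hle hlt]
    rfl
  obtain ⟨z, hz⟩ := (edist_eq_two_iff.mp hdist).2.2
  exact ⟨z, deleteEdges_le _ hz.1, deleteEdges_le _ hz.2⟩

end IsChordal

end Chordal

section Balls

variable {V : Type*} {G : SimpleGraph V} {v w x y : V} {l : ℕ}

/-- The closed ball of radius `l` around `v`, for the `ℕ`-valued distance: a vertex that is not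
reachable from `v` has distance `0` and so belongs to it. -/
abbrev distBall (G : SimpleGraph V) (v : V) (l : ℕ) : Set V := {w | G.dist v w ≤ l}

lemma mem_distBall_self : v ∈ distBall G v l := by simp

lemma IsGeodesic.mem_distBall {p : G.Walk v w} (hp : IsGeodesic p) (hw : w ∈ distBall G v l) :
    ∀ u ∈ p.support, u ∈ distBall G v l :=
  fun _ hu ↦ (Nat.le_of_add_right_le (hp.dist_add_dist hu).le).trans hw

lemma commonNeighbors_subset_distBall (hx : x ∈ distBall G v l) (hy : y ∈ distBall G v l)
    (hne : G.dist v x ≠ G.dist v y) : G.commonNeighbors x y ⊆ distBall G v l := by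
  rintro z ⟨hxz, hyz⟩
  have hdistx := Adj.diff_dist_adj (u := v) hxz
  have hdisty := Adj.diff_dist_adj (u := v) hyz
  simp only [Set.mem_ofPred_eq] at hx hy ⊢
  omega

lemma connected_induce_distBall (hG : G.Connected) (v : V) (l : ℕ) :
    (G.induce (distBall G v l)).Connected := by
  rw [connected_iff_exists_forall_reachable]
  refine ⟨⟨v, mem_distBall_self⟩, fun ⟨w, hw⟩ ↦ ?_⟩
  obtain ⟨p, hp : IsGeodesic p⟩ := hG.exists_walk_length_eq_dist v w
  exact (p.induce _ (hp.mem_distBall hw)).reachable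

lemma dist_induce_distBall (hG : G.Connected) (w : distBall G v l) :
    (G.induce (distBall G v l)).dist ⟨v, mem_distBall_self⟩ w = G.dist v w := by
  obtain ⟨p, hp : IsGeodesic p⟩ := hG.exists_walk_length_eq_dist v w
  exact hp.dist_induce (hp.mem_distBall w.2)

lemma IsChordal.not_isBridge_induce_distBall (hchordal : IsChordal G) (hG : G.Connected)
    (hbf : ∀ e, ¬ G.IsBridge e) (e : Sym2 (distBall G v l)) :
    ¬ (G.induce (distBall G v l)).IsBridge e := by
  have hconn := connected_induce_distBall hG v l
  induction e with | h x y
  intro hb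
  have hxy : G.Adj x y := hb.reachable_iff_adj.mp (hconn.preconnected x y)
  by_cases hdist : G.dist v x = G.dist v y
  · rw [← dist_induce_distBall hG, ← dist_induce_distBall hG] at hdist
    exact not_isBridge_of_dist_eq (hconn.preconnected _ x) (hconn.preconnected _ y) hdist hb
  · obtain ⟨z, hz⟩ := hchordal.commonNeighbors_nonempty_of_not_isBridge hxy (hbf _)
    have hzB : z ∈ distBall G v l := commonNeighbors_subset_distBall x.2 y.2 hdist hz
    exact not_isBridge_of_mem_commonNeighbors (z := ⟨z, hzB⟩) hz hb

end Balls

theorem stmt_16_general {V : Type*} (G : SimpleGraph V) (hG : G.Connected)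
    (hchordal : IsChordal G) (hbf : ∀ e : Sym2 V, ¬ G.IsBridge e) (v : V) (l : ℕ) :
    (G.induce {w : V | G.dist v w ≤ l}).Connected ∧
    IsChordal (G.induce {w : V | G.dist v w ≤ l}) ∧
    ∀ e, ¬ (G.induce {w : V | G.dist v w ≤ l}).IsBridge e :=
  ⟨connected_induce_distBall hG v l, hchordal.of_isIndContained ⟨Embedding.induce _⟩,
    hchordal.not_isBridge_induce_distBall hG hbf⟩

/-- If `v` is a vertex of eccentricity `r` in a finite connected
bridge-less chordal graph `G`, then for every `l ≤ r` the induced subgraph on the ball of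
radius `l` around `v` is a connected bridge-less chordal graph. -/
theorem stmt_16 {V : Type*} [Fintype V] (G : SimpleGraph V) (hG : G.Connected)
    (hchordal : IsChordal G) (hbf : ∀ e : Sym2 V, ¬ G.IsBridge e)
    (v : V) (r : ℕ) (hr : ecc G v = r) (l : ℕ) (hl : l ≤ r) :
    (G.induce {w : V | G.dist v w ≤ l}).Connected ∧
    IsChordal (G.induce {w : V | G.dist v w ≤ l}) ∧
    ∀ e, ¬ (G.induce {w : V | G.dist v w ≤ l}).IsBridge e :=
  stmt_16_general G hG hchordal hbf v l
end

section
/- Every finite connected simple interval graph G that is not a complete graph contains a dominating path of length at most diam(G) − 2, i.e., a path P on at most diam(G) − 1 vertices such that every vertex of G is in P or adjacent to a vertex of P. -/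
open SimpleGraph Set

/-!
Let `s` be the vertex whose interval ends first and `t` the one whose interval starts last; as `G`
is not complete, these two intervals are disjoint. The intervals along a walk leave no gap, so the
interior of a geodesic from `s` to `t` covers the whole gap between the two intervals. Every
interval ends no earlier than that of `s` and starts no later than that of `t`, hence meets the
interval of some interior vertex.
-/

section

variable {V α : Type*} {G : SimpleGraph V} {a b : V → α} {u v w s t : V}

/-- The intervals `[a v, b v]` of an ordered type represent `G` as an interval graph. Their
intersecting is expressed by inequalities between endpoints. -/
structure IsIntervalRepresentation [LE α] (G : SimpleGraph V) (a b : V → α) : Prop where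
  left_le_right : ∀ v, a v ≤ b v
  adj_iff : ∀ ⦃u v⦄, u ≠ v → (G.Adj u v ↔ a u ≤ b v ∧ a v ≤ b u)

theorem Icc_inter_Icc_nonempty_iff [Lattice α] {c₁ d₁ c₂ d₂ : α} (h₁ : c₁ ≤ d₁)
    (h₂ : c₂ ≤ d₂) :
    (Icc c₁ d₁ ∩ Icc c₂ d₂).Nonempty ↔ c₁ ≤ d₂ ∧ c₂ ≤ d₁ := by
  simp only [Icc_inter_Icc, nonempty_Icc, sup_le_iff, le_inf_iff, h₁, h₂, true_and,
    and_comm]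

theorem IsIntervalGraph.exists_isIntervalRepresentation (hG : IsIntervalGraph G) :
    ∃ a b : V → ℝ, IsIntervalRepresentation G a b := by
  obtain ⟨a, b, hab, hadj⟩ := hG
  exact ⟨a, b, hab, fun u v huv =>
    (hadj u v huv).trans (Icc_inter_Icc_nonempty_iff (hab u) (hab v))⟩

namespace IsIntervalRepresentation

theorem left_le_right_of_adj [LE α] (h : IsIntervalRepresentation G a b) (huv : G.Adj u v) :
    a u ≤ b v :=
  ((h.adj_iff huv.ne).1 huv).1

theorem one_lt_dist [Preorder α] (h : IsIntervalRepresentation G a b)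
    (hst : b s < a t) (hr : G.Reachable s t) : 1 < G.dist s t := by
  refine hr.one_lt_dist_of_ne_of_not_adj ?_ fun hadj =>
    (h.left_le_right_of_adj hadj.symm).not_gt hst
  rintro rfl
  exact (h.left_le_right s).not_gt hst

end IsIntervalRepresentation

variable [LinearOrder α]

theorem exists_mem_support_left_le_and_le_right (hadj : ∀ ⦃u v⦄, G.Adj u v → a v ≤ b u)
    {c : α} (p : G.Walk u w) (hu : a u ≤ c) (hw : c ≤ b w) :
    ∃ y ∈ p.support, a y ≤ c ∧ c ≤ b y := by
  induction p with
  | nil => exact ⟨_, Walk.start_mem_support _, hu, hw⟩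
  | @cons u v w huv q ih =>
    rcases le_or_gt c (b u) with hc | hc
    · exact ⟨u, Walk.start_mem_support _, hu, hc⟩
    · obtain ⟨y, hy, hcy⟩ := ih ((hadj huv).trans hc.le) hw
      exact ⟨y, List.mem_cons_of_mem _ hy, hcy⟩

namespace IsIntervalRepresentation

theorem isDominatingSet_support (h : IsIntervalRepresentation G a b) (p : G.Walk u w)
    (hu : ∀ x, a u ≤ b x) (hw : ∀ x, a x ≤ b w) : IsDominatingSet G {x | x ∈ p.support} := by
  intro x
  obtain ⟨y, hy, hyc, hcy⟩ :=
    exists_mem_support_left_le_and_le_right (fun _ _ huv => h.left_le_right_of_adj huv.symm) p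
      (le_max_right (a x) (a u)) (max_le (hw x) (hu w))
  rcases eq_or_ne y x with rfl | hyx
  · exact Or.inl hy
  · exact Or.inr ⟨y, hy, (h.adj_iff hyx).2
      ⟨hyc.trans (max_le (h.left_le_right x) (hu x)), (le_max_left _ _).trans hcy⟩⟩

theorem right_lt_left_of_not_adj (h : IsIntervalRepresentation G a b) (hs : ∀ x, b s ≤ b x)
    (ht : ∀ x, a x ≤ a t) (huv : u ≠ v) (hnadj : ¬G.Adj u v) : b s < a t := by
  contrapose! hnadj
  have meets (x y : V) : a x ≤ b y := (ht x).trans (hnadj.trans (hs y))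
  exact (h.adj_iff huv).2 ⟨meets u v, meets v u⟩

theorem exists_dominating_path (h : IsIntervalRepresentation G a b) (hs : ∀ x, b s ≤ b x)
    (ht : ∀ x, a x ≤ a t) (hst : b s < a t) (hr : G.Reachable s t) :
    ∃ (u w : V) (p : G.Walk u w), p.IsPath ∧ p.length + 2 = G.dist s t ∧
      IsDominatingSet G {x | x ∈ p.support} := by
  obtain ⟨p, hp, hlen⟩ := hr.exists_path_of_dist
  have one_lt_length : 1 < p.length := hlen ▸ h.one_lt_dist hst hr
  have tail_length : p.tail.length = p.length - 1 := p.length_tail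
  have p_not_nil : ¬p.Nil := Walk.not_nil_iff_lt_length.2 (by lia)
  have tail_not_nil : ¬p.tail.Nil := Walk.not_nil_iff_lt_length.2 (by lia)
  refine ⟨_, _, p.tail.dropLast, hp.tail.dropLast, ?_, h.isDominatingSet_support _ ?_ ?_⟩
  · rw [Walk.length_dropLast]
    lia
  · exact fun x => (h.left_le_right_of_adj (p.adj_snd p_not_nil).symm).trans (hs x)
  · exact fun x => (ht x).trans
      (h.left_le_right_of_adj (p.tail.adj_penultimate tail_not_nil).symm)

end IsIntervalRepresentation

theorem dist_le_graphDiam [Finite V] (G : SimpleGraph V) (u v : V) : G.dist u v ≤ graphDiam G :=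
  le_csSup (Set.finite_range fun p : V × V => G.dist p.1 p.2).bddAbove ⟨(u, v), rfl⟩

end

/-- Every finite connected interval graph that is not complete has a
dominating path of length at most `diam(G) − 2`. -/
theorem stmt_17 {V : Type*} [Fintype V] (G : SimpleGraph V) (hG : G.Connected)
    (hint : IsIntervalGraph G)
    (hnc : ∃ u v : V, u ≠ v ∧ ¬ G.Adj u v) :
    ∃ (u w : V) (p : G.Walk u w), p.IsPath ∧
      (p.length : ℤ) ≤ (graphDiam G : ℤ) - 2 ∧
      ∀ x : V, x ∈ p.support ∨ ∃ y ∈ p.support, G.Adj y x := by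
  obtain ⟨a, b, hrep⟩ := hint.exists_isIntervalRepresentation
  obtain ⟨x, y, hxy, hnadj⟩ := hnc
  have : Nonempty V := hG.nonempty
  obtain ⟨s, hs⟩ := Finite.exists_min b
  obtain ⟨t, ht⟩ := Finite.exists_max a
  have hst : b s < a t := hrep.right_lt_left_of_not_adj hs ht hxy hnadj
  obtain ⟨u, w, p, hp, hlen, hdom⟩ := hrep.exists_dominating_path hs ht hst (hG s t)
  have hdiam : G.dist s t ≤ graphDiam G := dist_le_graphDiam G s t
  exact ⟨u, w, p, hp, by lia, hdom⟩
end

section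
/- For every integer d ≥ 3 there exists a finite connected simple interval graph G with minimum degree at least 2 and diameter d such that rc(G) = d + 1. Concretely, the graph with vertex set {x_1, …, x_{d−1}} ∪ {y_1, y_2, y_3, y_4} ∪ {z_1, z_2, z_3, z_4}, where x_1, …, x_{d−1} form a path, each y_i is adjacent to x_1, each z_i is adjacent to x_{d−1}, and additionally the edges y_1y_2, y_3y_4, z_1z_2, z_3z_4 are present, is an interval graph with minimum degree 2 and diameter d whose rainbow connection number is d + 1. -/
open SimpleGraph Set

/-- The relation generating the example graph: vertices `Sum.inl i` are the path vertices
`x_1, …, x_{d-1}` (index `i = 0, …, d-2`), vertices `Sum.inr (Sum.inl k)` are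
`y_1, …, y_4` and vertices `Sum.inr (Sum.inr k)` are `z_1, …, z_4`.  The `x_i` form a
path, each `y` is adjacent to `x_1`, each `z` is adjacent to `x_{d-1}`, and additionally
the edges `y_1y_2`, `y_3y_4`, `z_1z_2`, `z_3z_4` are present. -/
def exRel (d : ℕ) : (Fin (d - 1) ⊕ (Fin 4 ⊕ Fin 4)) → (Fin (d - 1) ⊕ (Fin 4 ⊕ Fin 4)) → Prop
  | Sum.inl i, Sum.inl j => (i : ℕ) + 1 = (j : ℕ)
  | Sum.inl i, Sum.inr (Sum.inl _) => (i : ℕ) = 0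
  | Sum.inl i, Sum.inr (Sum.inr _) => (i : ℕ) = d - 2
  | Sum.inr (Sum.inl k), Sum.inr (Sum.inl m) =>
      ((k : ℕ) = 0 ∧ (m : ℕ) = 1) ∨ ((k : ℕ) = 2 ∧ (m : ℕ) = 3)
  | Sum.inr (Sum.inr k), Sum.inr (Sum.inr m) =>
      ((k : ℕ) = 0 ∧ (m : ℕ) = 1) ∨ ((k : ℕ) = 2 ∧ (m : ℕ) = 3)
  | _, _ => False

/-- The example graph from Figure 1 of the paper. -/
def exGraph (d : ℕ) : SimpleGraph (Fin (d - 1) ⊕ (Fin 4 ⊕ Fin 4)) :=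
  SimpleGraph.fromRel (exRel d)

/-!
Upper bound: colour the spine `x_1 … x_{d-1}` with `d - 2` colours, the two spokes of each pendant
triangle with two further colours, the same two for every triangle, and the four remaining triangle
edges with one last colour.  Spokes of different colours are joined through the spine; if the two
spokes have the same colour, the walk first crosses the triangle edge to change the spoke.

Lower bound: with only `d` colours, a rainbow path from `y_k` to `z_1` has at most `d` edges, so it
is the unique geodesic and uses every colour.  Hence the spoke at `y_k` carries the one colour
missing from the geodesic from `x_1` to `z_1`, whichever `k` is.  But every path from `y_1` to `y_3`
uses a spoke of each of the two triangles at `x_1`, so it repeats that colour.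
-/

section GeneralGraphs

variable {V : Type*} {G : SimpleGraph V}

theorem isIntervalGraph_of_adj_iff {a b : V → ℤ} (hab : ∀ v, a v ≤ b v)
    (hadj : ∀ u v, u ≠ v → (G.Adj u v ↔ a u ≤ b v ∧ a v ≤ b u)) : IsIntervalGraph G := by
  refine ⟨fun v ↦ a v, fun v ↦ b v, fun v ↦ Int.cast_le.2 (hab v), fun u v huv ↦ ?_⟩
  simp only [hadj u v huv, Set.Icc_inter_Icc, Set.nonempty_Icc, sup_le_iff, le_inf_iff,
    Int.cast_le, hab, true_and, and_true]
  exact and_comm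

theorem two_le_deg_of_adj [Finite V] {v a b : V} (hab : a ≠ b) (ha : G.Adj v a) (hb : G.Adj v b) :
    2 ≤ deg G v :=
  (Set.one_lt_ncard (Set.toFinite _)).2 ⟨a, ha, b, hb, hab⟩

theorem graphDiam_eq_of_dist_le {d : ℕ} (hle : ∀ u v, G.dist u v ≤ d)
    (hex : ∃ u v, G.dist u v = d) : graphDiam G = d := by
  obtain ⟨u, v, huv⟩ := hex
  refine IsGreatest.csSup_eq ⟨⟨(u, v), huv⟩, ?_⟩
  rintro _ ⟨p, rfl⟩
  exact hle p.1 p.2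

theorem exists_mem_edges_of_boundary_subset_singleton {S : Set V} {x u v : V}
    (hS : ∀ a ∈ S, ∀ b ∉ S, G.Adj a b → b = x) (p : G.Walk u v) (hu : u ∈ S) (hv : v ∉ S) :
    ∃ a ∈ S, s(a, x) ∈ p.edges := by
  obtain ⟨e, he, hfst, hsnd⟩ := p.exists_boundary_dart S hu hv
  obtain rfl := hS _ hfst _ hsnd e.adj
  exact ⟨e.fst, hfst, List.mem_map_of_mem he⟩

section Lipschitz

variable {f : V → ℕ}

theorem apply_le_apply_add_length (hf : ∀ u v, G.Adj u v → f v ≤ f u + 1) {u v : V}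
    (p : G.Walk u v) : f v ≤ f u + p.length := by
  induction p with
  | nil => exact Nat.le_refl _
  | cons h p ih =>
    have := hf _ _ h
    rw [Walk.length_cons]
    omega

theorem apply_getVert_eq_apply_add (hf : ∀ u v, G.Adj u v → f v ≤ f u + 1) {u v : V}
    {p : G.Walk u v} (hp : f u + p.length ≤ f v) {i : ℕ} (hi : i ≤ p.length) :
    f (p.getVert i) = f u + i := by
  have htake := apply_le_apply_add_length hf (p.take i)
  have hdrop := apply_le_apply_add_length hf (p.drop i)
  rw [Walk.take_length] at htake
  rw [Walk.drop_length] at hdrop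
  omega

end Lipschitz

end GeneralGraphs

section Rainbow

theorem length_le_of_nodup_of_forall_lt {L : List ℕ} {n : ℕ} (hL : L.Nodup)
    (hlt : ∀ a ∈ L, a < n) : L.length ≤ n := by
  simpa only [List.length_range] using
    (hL.subperm fun a ha ↦ List.mem_range.2 (hlt a ha)).length_le

theorem eq_of_nodup_cons_of_le_length {L : List ℕ} {n a b : ℕ} (ha : (a :: L).Nodup)
    (hb : (b :: L).Nodup) (hlt : ∀ x ∈ a :: b :: L, x < n) (hn : n ≤ L.length + 1) : a = b := by
  by_contra hab
  have hnodup : (a :: b :: L).Nodup := by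
    rw [List.nodup_cons, List.mem_cons, not_or]
    exact ⟨⟨hab, (List.nodup_cons.1 ha).1⟩, hb⟩
  have := length_le_of_nodup_of_forall_lt hnodup hlt
  simp only [List.length_cons] at this
  omega

variable {V : Type*} {G : SimpleGraph V} {c : Sym2 V → ℕ} {m n : ℕ} {u v w : V}

theorem length_le_of_nodup_map_edges {p : G.Walk u v} (hp : (p.edges.map c).Nodup)
    (hlt : ∀ e ∈ p.edges, c e < n) : p.length ≤ n := by
  simpa only [List.length_map, Walk.length_edges] using
    length_le_of_nodup_of_forall_lt hp (List.forall_mem_map.2 hlt)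

/-- `u` and `v` are joined by a rainbow walk whose colours are all smaller than `n`.  Bounding the
colours allows such walks to be built by adding one edge of a larger colour at a time. -/
def RainbowJoined (G : SimpleGraph V) (c : Sym2 V → ℕ) (n : ℕ) (u v : V) : Prop :=
  ∃ p : G.Walk u v, (p.edges.map c).Nodup ∧ ∀ e ∈ p.edges, c e < n

namespace RainbowJoined

theorem refl (u : V) : RainbowJoined G c n u u :=
  ⟨Walk.nil, by simp⟩

theorem symm (h : RainbowJoined G c n u v) : RainbowJoined G c n v u := by
  obtain ⟨p, hp, hlt⟩ := h
  exact ⟨p.reverse, by simpa using hp, by simpa using hlt⟩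

theorem mono (h : RainbowJoined G c m u v) (hmn : m ≤ n) : RainbowJoined G c n u v := by
  obtain ⟨p, hp, hlt⟩ := h
  exact ⟨p, hp, fun e he ↦ (hlt e he).trans_le hmn⟩

theorem cons (h : RainbowJoined G c m v w) (hadj : G.Adj u v) (hm : m ≤ c s(u, v))
    (hn : c s(u, v) < n) : RainbowJoined G c n u w := by
  obtain ⟨p, hp, hlt⟩ := h
  refine ⟨Walk.cons hadj p, ?_, ?_⟩
  · rw [Walk.edges_cons, List.map_cons, List.nodup_cons]
    refine ⟨fun hmem ↦ ?_, hp⟩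
    obtain ⟨e, he, hce⟩ := List.mem_map.1 hmem
    exact (hlt e he).not_ge (hce ▸ hm)
  · rw [Walk.edges_cons, List.forall_mem_cons]
    exact ⟨hn, fun e he ↦ (hlt e he).trans_le (hm.trans hn.le)⟩

theorem dist_le (h : RainbowJoined G c n u v) : G.dist u v ≤ n := by
  obtain ⟨p, hp, hlt⟩ := h
  exact (SimpleGraph.dist_le p).trans (length_le_of_nodup_map_edges hp hlt)

theorem exists_isPath (h : RainbowJoined G c n u v) :
    ∃ p : G.Walk u v, p.IsPath ∧ (p.edges.map c).Nodup := by
  classical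
  obtain ⟨p, hp, -⟩ := h
  refine ⟨p.bypass, p.bypass_isPath, p.bypass_isPath.isTrail.edges_nodup.map_on ?_⟩
  intro e he e' he' hee'
  exact List.inj_on_of_nodup_map hp (p.edges_bypass_subset_edges he)
    (p.edges_bypass_subset_edges he') hee'

end RainbowJoined

theorem RainbowConnectedUnder.preconnected (h : RainbowConnectedUnder G c) : G.Preconnected :=
  fun u v ↦ ⟨(h u v).choose⟩

end Rainbow

namespace exGraph

/-- The vertices `y_k` (left summand) and `z_k` (right summand). -/
abbrev Pendant : Type := Fin 4 ⊕ Fin 4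

/-- The vertices of `exGraph d`: the spine `x_1, …, x_{d-1}` and the pendant vertices. -/
abbrev Vertex (d : ℕ) : Type := Fin (d - 1) ⊕ Pendant

/-- The index of the spine vertex that a pendant vertex is attached to; index `i` is `x_{i+1}`. -/
def anchor {d : ℕ} (hd : 2 ≤ d) : Pendant → Fin (d - 1)
  | .inl _ => ⟨0, by omega⟩
  | .inr _ => ⟨d - 2, by omega⟩

/-- The third vertex of the triangle formed by a pendant vertex and its anchor. -/
def mate : Pendant → Pendant := Sum.map ![1, 0, 3, 2] ![1, 0, 3, 2]

/-- Distinguishes the two pendant vertices of each triangle. -/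
def parity : Pendant → ℕ
  | .inl k => k % 2
  | .inr k => k % 2

theorem parity_lt_two : ∀ s, parity s < 2 := by decide

theorem mate_mate : ∀ s, mate (mate s) = s := by decide

theorem anchor_mate {d : ℕ} (hd : 2 ≤ d) (s : Pendant) :
    anchor hd (mate s) = anchor hd s := by
  cases s <;> rfl

theorem parity_mate_ne : ∀ s, parity (mate s) ≠ parity s := by decide

/-- The distance from the set of the `y_k`: it is `0` at `y_k`, `i` at `x_i` and `d` at `z_k`. -/
def level (d : ℕ) : Vertex d → ℕ
  | .inl i => i + 1
  | .inr (.inl _) => 0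
  | .inr (.inr _) => d

/-- The edge `x_i x_{i+1}` receives the colour `i - 1`, each pendant triangle has the colours
`d - 2` and `d - 1` on its spokes and the colour `d` on the remaining edge. -/
def colouring (d : ℕ) : Sym2 (Vertex d) → ℕ :=
  Sym2.lift ⟨fun
    | .inl i, .inl j => min i j
    | .inl _, .inr s => d - 2 + parity s
    | .inr s, .inl _ => d - 2 + parity s
    | .inr _, .inr _ => d,
    by rintro (i | s) (j | t) <;> simp only [min_comm]⟩

variable {d : ℕ}

theorem adj_iff {u v : Vertex d} :
    (exGraph d).Adj u v ↔ u ≠ v ∧ (exRel d u v ∨ exRel d v u) :=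
  SimpleGraph.fromRel_adj _ _ _

theorem adj_inl_inl {i j : Fin (d - 1)} :
    (exGraph d).Adj (.inl i) (.inl j) ↔ (i : ℕ) + 1 = j ∨ (j : ℕ) + 1 = i := by
  simp only [adj_iff, exRel, ne_eq, Sum.inl.injEq, Fin.ext_iff]
  omega

theorem adj_inr_inl (hd : 2 ≤ d) {s : Pendant} {i : Fin (d - 1)} :
    (exGraph d).Adj (.inr s) (.inl i) ↔ i = anchor hd s := by
  rcases s with k | k <;> simp [adj_iff, exRel, anchor, Fin.ext_iff]

theorem adj_inr_inr {s t : Pendant} :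
    (exGraph d).Adj (.inr s) (.inr t) ↔ t = mate s := by
  rcases s with k | k <;> rcases t with m | m <;>
    simp only [adj_iff, exRel, mate, Sum.map_inl, Sum.map_inr, ne_eq, Sum.inr.injEq,
      Sum.inl.injEq, reduceCtorEq, or_self, and_false]
  all_goals revert k m; decide

theorem adj_anchor (hd : 2 ≤ d) (s : Pendant) :
    (exGraph d).Adj (.inr s) (.inl (anchor hd s)) :=
  (adj_inr_inl hd).2 rfl

theorem adj_anchor_inl_zero (hd : 2 ≤ d) (k : Fin 4) :
    (exGraph d).Adj (.inr (.inl k)) (.inl (anchor hd (.inl 0))) :=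
  adj_anchor hd (.inl k)

theorem isIntervalGraph (hd : 2 ≤ d) : IsIntervalGraph (exGraph d) := by
  let a : Vertex d → ℤ
    | .inl i => 3 * i
    | .inr (.inl k) => (k : ℕ) / 2
    | .inr (.inr k) => 3 * (d - 1) - (k : ℕ) / 2
  let b : Vertex d → ℤ
    | .inl i => 3 * i + 3
    | .inr s => a (.inr s)
  refine isIntervalGraph_of_adj_iff (a := a) (b := b) ?_ fun u v huv ↦ ?_
  · rintro (i | s) <;> simp [a, b]
  · rw [adj_iff]
    rcases u with i | k | k <;> rcases v with j | m | m <;>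
      simp [a, b, exRel, Fin.ext_iff, -Fin.val_eq_zero_iff] at huv ⊢ <;> omega

section Degree

theorem exists_adj_inl_level_eq (i : Fin (d - 1)) :
    ∃ v, (exGraph d).Adj (.inl i) v ∧ level d v = i := by
  have hd : 2 ≤ d := by have := i.isLt; omega
  by_cases hi : (i : ℕ) = 0
  · exact ⟨.inr (.inl 0), ((adj_inr_inl hd).2 (Fin.ext hi)).symm, hi.symm⟩
  · refine ⟨.inl ⟨i - 1, by omega⟩, adj_inl_inl.2 ?_, ?_⟩ <;> simp only [level] <;> omega

theorem exists_adj_inl_level_eq_add_two (i : Fin (d - 1)) :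
    ∃ v, (exGraph d).Adj (.inl i) v ∧ level d v = i + 2 := by
  have hd : 2 ≤ d := by have := i.isLt; omega
  by_cases hi : (i : ℕ) = d - 2
  · exact ⟨.inr (.inr 0), ((adj_inr_inl hd).2 (Fin.ext hi)).symm, by simp only [level]; omega⟩
  · exact ⟨.inl ⟨i + 1, by omega⟩, adj_inl_inl.2 (Or.inl rfl), rfl⟩

theorem deg_inr (hd : 2 ≤ d) (s : Pendant) : deg (exGraph d) (.inr s) = 2 := by
  have hnbhd : (exGraph d).neighborSet (.inr s) = {.inl (anchor hd s), .inr (mate s)} := by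
    ext (i | t)
    · simp [adj_inr_inl hd]
    · simp [adj_inr_inr]
  rw [deg, hnbhd, Set.ncard_pair Sum.inl_ne_inr]

theorem two_le_deg (hd : 2 ≤ d) : ∀ v, 2 ≤ deg (exGraph d) v
  | .inl i => by
    obtain ⟨a, ha, hla⟩ := exists_adj_inl_level_eq i
    obtain ⟨b, hb, hlb⟩ := exists_adj_inl_level_eq_add_two i
    exact two_le_deg_of_adj (by rintro rfl; omega) ha hb
  | .inr s => (deg_inr hd s).ge

end Degree

section UpperBound

theorem colouring_lt (e : Sym2 (Vertex d)) : colouring d e < d + 1 := by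
  induction e with | _ u v
  rcases u with i | s <;> rcases v with j | t <;> simp only [colouring, Sym2.lift_mk]
  · omega
  · have := i.isLt
    have := parity_lt_two t
    omega
  · have := j.isLt
    have := parity_lt_two s
    omega
  · omega

theorem rainbowJoined_inl_inl (i j : Fin (d - 1)) :
    RainbowJoined (exGraph d) (colouring d) (d - 2) (.inl i) (.inl j) := by
  have upward (i : Fin (d - 1)) (n : ℕ) (hin : (i : ℕ) ≤ n) (hn : n < d - 1) :
      RainbowJoined (exGraph d) (colouring d) n (.inl ⟨n, hn⟩) (.inl i) := by
    induction n, hin using Nat.le_induction with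
    | base => exact .refl _
    | succ n _ ih =>
      refine (ih (by omega)).cons (adj_inl_inl.2 (Or.inr rfl)) ?_ ?_ <;>
        simp [colouring]
  rcases le_total i j with hij | hji
  · exact ((upward i j hij j.2).mono (by omega)).symm
  · exact (upward j i hji i.2).mono (by omega)

theorem rainbowJoined_inr_inl (hd : 2 ≤ d) (s : Pendant) (j : Fin (d - 1)) :
    RainbowJoined (exGraph d) (colouring d) (d - 2 + parity s + 1) (.inr s) (.inl j) :=
  (rainbowJoined_inl_inl _ j).cons (adj_anchor hd s) (Nat.le_add_right _ _) (Nat.lt_succ_self _)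

theorem rainbowJoined_inr_inr_of_parity_ne (hd : 2 ≤ d) {s t : Pendant}
    (hst : parity s ≠ parity t) :
    RainbowJoined (exGraph d) (colouring d) d (.inr s) (.inr t) := by
  wlog hlt : parity s < parity t generalizing s t
  · exact (this hst.symm (by omega)).symm
  have := parity_lt_two t
  refine ((rainbowJoined_inr_inl hd s _).symm.cons (adj_anchor hd t) ?_ ?_).symm <;>
    simp only [colouring, Sym2.lift_mk] <;> omega

theorem rainbowJoined (hd : 2 ≤ d) (u v : Vertex d) :
    RainbowJoined (exGraph d) (colouring d) (d + 1) u v := by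
  have inr_inl (s j) : RainbowJoined (exGraph d) (colouring d) (d + 1) (.inr s) (.inl j) :=
    (rainbowJoined_inr_inl hd s j).mono (by have := parity_lt_two s; omega)
  rcases u with i | s <;> rcases v with j | t
  · exact (rainbowJoined_inl_inl i j).mono (by omega)
  · exact (inr_inl t i).symm
  · exact inr_inl s j
  · by_cases hst : parity s = parity t
    · exact (rainbowJoined_inr_inr_of_parity_ne hd (hst ▸ parity_mate_ne s)).cons
        (adj_inr_inr.2 rfl) le_rfl (Nat.lt_succ_self d)
    · exact (rainbowJoined_inr_inr_of_parity_ne hd hst).mono d.le_succ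

theorem rainbowConnectedUnder_colouring (hd : 2 ≤ d) :
    RainbowConnectedUnder (exGraph d) (colouring d) :=
  fun u v ↦ (rainbowJoined hd u v).exists_isPath

end UpperBound

section Distance

theorem connected (hd : 2 ≤ d) : (exGraph d).Connected :=
  have : Nonempty (Vertex d) := ⟨.inr (.inl 0)⟩
  ⟨(rainbowConnectedUnder_colouring hd).preconnected⟩

theorem dist_inl_inr_le (hd : 2 ≤ d) (i : Fin (d - 1)) (s : Pendant) :
    (exGraph d).dist (.inl i) (.inr s) ≤ d - 1 := by
  have htriangle := (connected hd).dist_triangle (u := .inl i) (v := .inl (anchor hd s))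
    (w := .inr s)
  have hspine := (rainbowJoined_inl_inl i (anchor hd s)).dist_le
  have hspoke := dist_eq_one_iff_adj.2 (adj_anchor hd s).symm
  omega

theorem dist_le (hd : 2 ≤ d) : ∀ u v, (exGraph d).dist u v ≤ d
  | .inl i, .inl j => (rainbowJoined_inl_inl i j).dist_le.trans (Nat.sub_le _ _)
  | .inl i, .inr s => (dist_inl_inr_le hd i s).trans (Nat.sub_le _ _)
  | .inr s, .inl i => dist_comm.trans_le ((dist_inl_inr_le hd i s).trans (Nat.sub_le _ _))
  | .inr s, .inr t => by
    have htriangle := (connected hd).dist_triangle (u := .inr s) (v := .inl (anchor hd s))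
      (w := .inr t)
    have hspoke := dist_eq_one_iff_adj.2 (adj_anchor hd s)
    have hrest := dist_inl_inr_le hd (anchor hd s) t
    omega

theorem level_le_level_add_one (u v : Vertex d) (h : (exGraph d).Adj u v) :
    level d v ≤ level d u + 1 := by
  rw [adj_iff] at h
  rcases u with i | k | k <;> rcases v with j | m | m <;>
    simp only [exRel, or_false, false_or, and_false] at h <;> simp only [level] <;> omega

theorem le_length (k m : Fin 4) (p : (exGraph d).Walk (.inr (.inl k)) (.inr (.inr m))) :
    d ≤ p.length := by
  simpa only [level, Nat.zero_add] using apply_le_apply_add_length level_le_level_add_one p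

theorem graphDiam_eq (hd : 2 ≤ d) : graphDiam (exGraph d) = d := by
  refine graphDiam_eq_of_dist_le (dist_le hd)
    ⟨.inr (.inl 0), .inr (.inr 0), (dist_le hd _ _).antisymm ?_⟩
  obtain ⟨p, hp⟩ := (connected hd).exists_walk_length_eq_dist (.inr (.inl 0)) (.inr (.inr 0))
  exact hp ▸ le_length 0 0 p

end Distance

section LowerBound

theorem eq_of_level_eq {u v : Vertex d} (h : level d u = level d v)
    (hpos : 0 < level d u) (hlt : level d u < d) : u = v := by
  rcases u with i | k | k <;> rcases v with j | m | m <;>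
    simp only [level, Sum.inl.injEq, Fin.ext_iff] at h hpos hlt ⊢ <;> omega

theorem walk_eq_of_length_le {k m : Fin 4}
    {p q : (exGraph d).Walk (.inr (.inl k)) (.inr (.inr m))} (hp : p.length ≤ d)
    (hq : q.length ≤ d) : p = q := by
  have hp' : p.length = d := hp.antisymm (le_length k m p)
  have hq' : q.length = d := hq.antisymm (le_length k m q)
  have level_getVert {r : (exGraph d).Walk (.inr (.inl k)) (.inr (.inr m))}
      (hr : r.length = d) {i : ℕ} (hi : i ≤ d) : level d (r.getVert i) = i := by
    simpa only [level, Nat.zero_add] using apply_getVert_eq_apply_add level_le_level_add_one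
      (p := r) (by simp only [level]; omega) (hi.trans_eq hr.symm)
  refine Walk.ext_getVert_le_length (hp'.trans hq'.symm) fun i hi ↦ ?_
  rcases i.eq_zero_or_pos with rfl | hpos
  · rw [Walk.getVert_zero, Walk.getVert_zero]
  · rcases (hp' ▸ hi).eq_or_lt with rfl | hlt
    · rw [Walk.getVert_of_length_le p hp, Walk.getVert_of_length_le q hq]
    · have hpi := level_getVert hp' hlt.le
      have hqi := level_getVert hq' hlt.le
      exact eq_of_level_eq (hpi.trans hqi.symm) (hpos.trans_eq hpi.symm) (hpi.trans_lt hlt)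

variable {c : Sym2 (Vertex d) → ℕ}

theorem nodup_spoke_cons (hd : 2 ≤ d) (hc : ∀ e ∈ (exGraph d).edgeSet, c e < d)
    (hr : RainbowConnectedUnder (exGraph d) c) {m : Fin 4}
    {q : (exGraph d).Walk (.inl (anchor hd (.inl 0))) (.inr (.inr m))} (hq : q.length ≤ d - 1)
    (k : Fin 4) :
    (c s(.inr (.inl k), .inl (anchor hd (.inl 0))) :: q.edges.map c).Nodup := by
  obtain ⟨p, -, hp⟩ := hr (.inr (.inl k)) (.inr (.inr m))
  have hp_eq : p = .cons (adj_anchor_inl_zero hd k) q :=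
    walk_eq_of_length_le
      (length_le_of_nodup_map_edges hp fun e he ↦ hc e (p.edges_subset_edgeSet he))
      (by rw [Walk.length_cons]; omega)
  rwa [hp_eq, Walk.edges_cons, List.map_cons] at hp

theorem colour_spoke_eq (hd : 2 ≤ d) (hc : ∀ e ∈ (exGraph d).edgeSet, c e < d)
    (hr : RainbowConnectedUnder (exGraph d) c) (k l : Fin 4) :
    c s(.inr (.inl k), .inl (anchor hd (.inl 0))) =
      c s(.inr (.inl l), .inl (anchor hd (.inl 0))) := by
  obtain ⟨q, hq⟩ := (connected hd).exists_walk_length_eq_dist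
    (.inl (anchor hd (.inl 0))) (.inr (.inr 0))
  have hq_le : q.length ≤ d - 1 := hq.trans_le (dist_inl_inr_le hd _ _)
  have hq_ge := le_length k 0 (.cons (adj_anchor_inl_zero hd k) q)
  refine eq_of_nodup_cons_of_le_length (nodup_spoke_cons hd hc hr hq_le k)
    (nodup_spoke_cons hd hc hr hq_le l) ?_ (n := d) ?_
  · simp only [List.forall_mem_cons, List.forall_mem_map]
    exact ⟨hc _ (adj_anchor_inl_zero hd k), hc _ (adj_anchor_inl_zero hd l),
      fun e he ↦ hc e (q.edges_subset_edgeSet he)⟩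
  · simpa only [List.length_map, Walk.length_edges, Walk.length_cons] using hq_ge

theorem exists_spoke_mem_edges (hd : 2 ≤ d) {s : Pendant} {v : Vertex d}
    (p : (exGraph d).Walk (.inr s) v) (hv : v ≠ .inr s) (hv' : v ≠ .inr (mate s)) :
    ∃ t, (t = s ∨ t = mate s) ∧ s(.inr t, .inl (anchor hd s)) ∈ p.edges := by
  let S : Set (Vertex d) := {.inr s, .inr (mate s)}
  have hboundary : ∀ a ∈ S, ∀ b ∉ S, (exGraph d).Adj a b → b = .inl (anchor hd s) := by
    rintro _ (rfl | rfl) (i | t) hb hadj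
    · rw [(adj_inr_inl hd).1 hadj]
    · exact absurd (Or.inr (congrArg _ (adj_inr_inr.1 hadj))) hb
    · rw [(adj_inr_inl hd).1 hadj, anchor_mate]
    · exact absurd (Or.inl (congrArg _ ((adj_inr_inr.1 hadj).trans (mate_mate s)))) hb
  obtain ⟨_, rfl | rfl, hmem⟩ := exists_mem_edges_of_boundary_subset_singleton hboundary p
    (Or.inl rfl) (not_or.2 ⟨hv, hv'⟩)
  · exact ⟨s, Or.inl rfl, hmem⟩
  · exact ⟨mate s, Or.inr rfl, hmem⟩

theorem not_rainbowConnectedUnder (hd : 2 ≤ d) (hc : ∀ e ∈ (exGraph d).edgeSet, c e < d) :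
    ¬ RainbowConnectedUnder (exGraph d) c := by
  intro hr
  obtain ⟨p, -, hp⟩ := hr (.inr (.inl 0)) (.inr (.inl 2))
  obtain ⟨s, hs, hs_mem⟩ := exists_spoke_mem_edges hd p (by simp) (by simp [mate])
  obtain ⟨t, ht, ht_mem⟩ := exists_spoke_mem_edges hd p.reverse (by simp) (by simp [mate])
  rw [Walk.edges_reverse, List.mem_reverse] at ht_mem
  rcases hs with rfl | rfl <;> rcases ht with rfl | rfl <;>
  · have hspoke := List.inj_on_of_nodup_map hp hs_mem ht_mem (colour_spoke_eq hd hc hr _ _)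
    simp [mate] at hspoke

end LowerBound

theorem rc_eq (hd : 2 ≤ d) : rc (exGraph d) = d + 1 := by
  refine IsLeast.csInf_eq ⟨⟨colouring d, fun e _ ↦ colouring_lt e,
    rainbowConnectedUnder_colouring hd⟩, ?_⟩
  rintro n ⟨c, hc, hr⟩
  by_contra! hn
  exact not_rainbowConnectedUnder hd (fun e he ↦ (hc e he).trans_le (Nat.le_of_lt_succ hn)) hr

end exGraph

/-- At `d = 2` the graph is the friendship graph of four triangles sharing the vertex `x_1`. -/
theorem stmt_18_general (d : ℕ) (hd : 2 ≤ d) :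
    IsIntervalGraph (exGraph d) ∧ (exGraph d).Connected ∧
    (∀ v, 2 ≤ deg (exGraph d) v) ∧ (∃ v, deg (exGraph d) v = 2) ∧
    graphDiam (exGraph d) = d ∧ rc (exGraph d) = d + 1 :=
  ⟨exGraph.isIntervalGraph hd, exGraph.connected hd, exGraph.two_le_deg hd,
    ⟨.inr (.inl 0), exGraph.deg_inr hd _⟩, exGraph.graphDiam_eq hd, exGraph.rc_eq hd⟩

/-- For every `d ≥ 3`, the concrete graph `exGraph d` is a connected
interval graph with minimum degree exactly 2 and diameter `d`, whose rainbow connection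
number equals `d + 1`.  (In particular, for every `d ≥ 3` there exists a finite connected
interval graph with minimum degree at least 2, diameter `d` and rainbow connection number
`d + 1`.) -/
theorem stmt_18 (d : ℕ) (hd : 3 ≤ d) :
    IsIntervalGraph (exGraph d) ∧ (exGraph d).Connected ∧
    (∀ v, 2 ≤ deg (exGraph d) v) ∧ (∃ v, deg (exGraph d) v = 2) ∧
    graphDiam (exGraph d) = d ∧ rc (exGraph d) = d + 1 := by
  exact stmt_18_general d (Nat.le_of_succ_le hd)
end
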